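/- The singular part RP_n ∖ S_n of the rook partition monoid has semigroup presentation ⟨E ∪ T ∪ O | (R1)–(R17)⟩ via Φ; that is, the semigroup homomorphism Φ : (E∪T∪O)^+ → RP_n ∖ S_n is surjective and its kernel congruence {(u,v) : uΦ = vΦ} equals the congruence ~ generated by the relations (R1)–(R17). -/

import Mathlib

/-!
The dot letter `o_i` behaves like a letter `t_{i0}`, where `0` is an additional vertex standing for
being a rook dot (`none : Option (Fin n)` below). With this convention the relations involving
`o_i` are instances of those involving `t_ij`, except that there is no letter `e_0`: this is the
structure `PRels`. The argument has three ingredients.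

*Products of the `e_i t_ij e_j`.* The element `g_ij = e_i t_ij e_j` (with `g_ii = e_i`) represents
a partial permutation with a hole: it is undefined at `i`, moves `j` to `i` and fixes everything
else. Once a point `k` is missing, loops `k → i → j → k` of the hole act as transpositions of the
points other than `k`, and the relations on three and four indices are exactly what makes these
loops satisfy the transposition presentation of the symmetric group (`TranspSys.wd_eq`). Hence
every product of the `g_ij` has a normal form, and is determined by its partial permutation
(`J.unique`).

*Normal forms.* Every nonempty word is congruent to `x s y`, where `x` and `y` are products of
letters `t` (including the `o_i`) and `s` is a product of the `g_ij` (`PRels.exp_mul_e` is the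
crucial step). Saturating `x` and `y`, they become the products of all `t_ab` over the equivalence
relations of left and right units; then the strings of the partial permutation can be deleted or
moved until they join chosen representatives of classes (`PRels.exists_reduced`).

*The model.* A rook partition is faithfully represented by the relation between two-colourings of
the upper points and two-colourings of the lower points which extend to a colouring constant on
blocks and `False` on rook dots; the product becomes the composition of relations (`D_mul`,
`D_injective`). The data of a reduced normal form, the two equivalence relations and the partial
permutation, can be read off from this relation (`PRels.eq_of_map_eq`), so congruence classes of
nonempty words are determined by their rook partitions.

Conversely every rook partition is given by such data (`exists_encoding`), and it is singular iff
the partial permutation has a hole, in which case it is a product of the `g_ij`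
(`J.exists_of_none`). A nonempty word is singular because the relation of its first letter is not
total or does not determine the upper colouring.
-/

namespace RookPaper

/-- Reflexive–symmetric–transitive closure of a relation
(connectivity by paths in a graph). -/
inductive RClosure {V : Type*} (E : V → V → Prop) : V → V → Prop
  | base {x y : V} : E x y → RClosure E x y
  | refl (x : V) : RClosure E x x
  | symm {x y : V} : RClosure E x y → RClosure E y x
  | trans {x y z : V} : RClosure E x y → RClosure E y z → RClosure E x z

/-- The 2n points `1,…,n` (`Sum.inl`) and `1',…,n'` (`Sum.inr`). -/
abbrev Pt (n : ℕ) := Fin n ⊕ Fin n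

/-- A rook partition of degree `n`, encoded as a partial equivalence relation on the
`2n` points: its blocks are the equivalence classes of `rel`, and the rook dots are the
points `x` with `¬ rel x x`. -/
structure RP (n : ℕ) where
  rel : Pt n → Pt n → Prop
  symm : ∀ {x y : Pt n}, rel x y → rel y x
  trans : ∀ {x y z : Pt n}, rel x y → rel y z → rel x z

/-- The underlying index in `[n]` of a point (`i` and `i'` both have index `i`). -/
def idx {n : ℕ} : Pt n → Fin n := Sum.elim id id

/-- For `A ⊆ [n]`, the corresponding set of upper points. -/
def upSet {n : ℕ} (A : Set (Fin n)) : Set (Pt n) := Sum.inl '' A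

/-- For `B ⊆ [n]`, the set `B' = {b' : b ∈ B}` of lower points. -/
def dnSet {n : ℕ} (B : Set (Fin n)) : Set (Pt n) := Sum.inr '' B

/-- `x` is a rook dot of `α`. -/
def RP.IsRookDot {n : ℕ} (α : RP n) (x : Pt n) : Prop := ¬ α.rel x x

/-- `α` has no rook dots, i.e. `α` lies in the partition monoid `P_n`. -/
def RP.NoDots {n : ℕ} (α : RP n) : Prop := ∀ x, α.rel x x

/-- `B` is a block of `α`. -/
def RP.IsBlock {n : ℕ} (α : RP n) (B : Set (Pt n)) : Prop :=
  ∃ x, α.rel x x ∧ B = {y | α.rel x y}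

/-- The identity rook partition, with blocks `{i,i'}`. -/
instance {n : ℕ} : One (RP n) :=
  ⟨{ rel := fun x y => idx x = idx y
     symm := fun h => Eq.symm h
     trans := fun h h' => Eq.trans h h' }⟩

/-! The product graph `Γ(α,β)` lives on three rows of `n` vertices. -/

abbrev V3 (n : ℕ) := Fin n ⊕ Pt n

def vTop {n : ℕ} (i : Fin n) : V3 n := Sum.inl i
def vMid {n : ℕ} (i : Fin n) : V3 n := Sum.inr (Sum.inl i)
def vBot {n : ℕ} (i : Fin n) : V3 n := Sum.inr (Sum.inr i)

/-- `α` occupies the top and middle rows. -/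
def embA {n : ℕ} : Pt n → V3 n := Sum.elim vTop vMid
/-- `β` occupies the middle and bottom rows. -/
def embB {n : ℕ} : Pt n → V3 n := Sum.elim vMid vBot
/-- The product `αβ` lives on the top and bottom rows. -/
def embOut {n : ℕ} : Pt n → V3 n := Sum.elim vTop vBot

/-- The edges of the product graph `Γ(α,β)`. -/
def pgEdge {n : ℕ} (α β : RP n) (x y : V3 n) : Prop :=
  (∃ a b : Pt n, α.rel a b ∧ x = embA a ∧ y = embA b) ∨
  (∃ a b : Pt n, β.rel a b ∧ x = embB a ∧ y = embB b)

/-- Connectivity (by a possibly empty path) in the product graph `Γ(α,β)`. -/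
def pgConn {n : ℕ} (α β : RP n) : V3 n → V3 n → Prop :=
  RClosure (pgEdge α β)

/-- The white vertices of `Γ(α,β)`: a top vertex is white if it is a rook dot of `α`,
a bottom vertex is white if it is a rook dot of `β`, and a middle vertex is white if it is
a rook dot of `α` (as a lower point) or of `β` (as an upper point). -/
def pgWhite {n : ℕ} (α β : RP n) (v : V3 n) : Prop :=
  (∃ i, v = vTop i ∧ ¬ α.rel (Sum.inl i) (Sum.inl i)) ∨
  (∃ i, v = vMid i ∧ (¬ α.rel (Sum.inr i) (Sum.inr i) ∨ ¬ β.rel (Sum.inl i) (Sum.inl i))) ∨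
  (∃ i, v = vBot i ∧ ¬ β.rel (Sum.inr i) (Sum.inr i))

/-- The product of two rook partitions: a point of `αβ` is a rook dot iff it is connected
to a white vertex of `Γ(α,β)`, and two points are in the same block of `αβ` iff they are
connected in `Γ(α,β)` (and are not rook dots). -/
instance {n : ℕ} : Mul (RP n) :=
  ⟨fun α β =>
    { rel := fun x y =>
        pgConn α β (embOut x) (embOut y) ∧
          ∀ w, pgWhite α β w → ¬ pgConn α β (embOut x) w
      symm := by
        intro x y h
        exact ⟨RClosure.symm h.1, fun w hw hc => h.2 w hw (RClosure.trans h.1 hc)⟩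
      trans := by
        intro x y z h h'
        exact ⟨RClosure.trans h.1 h'.1, h.2⟩ }⟩

/-- The rook partition corresponding to a permutation `σ`: blocks `{i, (σ i)'}`. -/
def permRP {n : ℕ} (σ : Equiv.Perm (Fin n)) : RP n where
  rel x y := Sum.elim (fun i => σ i) (fun i => i) x = Sum.elim (fun i => σ i) (fun i => i) y
  symm := fun h => Eq.symm h
  trans := fun h h' => Eq.trans h h'

/-- `α` lies in the copy of the symmetric group `S_n` inside `RP_n`. -/
def RP.IsPermDiag {n : ℕ} (α : RP n) : Prop := ∃ σ : Equiv.Perm (Fin n), α = permRP σ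

/-- The generator `ē_i` : blocks `{j,j'}` for `j ≠ i`, and singleton blocks `{i}`, `{i'}`. -/
def ebar {n : ℕ} (i : Fin n) : RP n where
  rel x y := x = y ∨ (idx x = idx y ∧ idx x ≠ i)
  symm := by
    rintro x y (rfl | ⟨h1, h2⟩)
    · exact Or.inl rfl
    · exact Or.inr ⟨h1.symm, h1 ▸ h2⟩
  trans := by
    rintro x y z (rfl | ⟨h1, h2⟩) h
    · exact h
    · rcases h with rfl | ⟨h3, h4⟩
      · exact Or.inr ⟨h1, h2⟩
      · exact Or.inr ⟨h1.trans h3, h2⟩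

/-- The generator `t̄_ij` (for `i ≠ j`): blocks `{k,k'}` for `k ∉ {i,j}`, and `{i,j,i',j'}`. -/
def tbar {n : ℕ} (i j : Fin n) : RP n where
  rel x y := idx x = idx y ∨ ((idx x = i ∨ idx x = j) ∧ (idx y = i ∨ idx y = j))
  symm := by
    rintro x y (h | ⟨h1, h2⟩)
    · exact Or.inl h.symm
    · exact Or.inr ⟨h2, h1⟩
  trans := by
    rintro x y z hxy hyz
    rcases hxy with h | ⟨h1, h2⟩
    · rcases hyz with h' | ⟨h3, h4⟩
      · exact Or.inl (h.trans h')
      · refine Or.inr ⟨?_, h4⟩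
        rw [h]; exact h3
    · rcases hyz with h' | ⟨h3, h4⟩
      · refine Or.inr ⟨h1, ?_⟩
        rw [← h']; exact h2
      · exact Or.inr ⟨h1, h4⟩

/-- `ō_A` for a subset `A ⊆ [n]`: rook dots at all points of `A ∪ A'`, blocks `{j,j'}` for
`j ∉ A`. -/
def obarS {n : ℕ} (A : Set (Fin n)) : RP n where
  rel x y := idx x = idx y ∧ idx x ∉ A
  symm := by
    rintro x y ⟨h1, h2⟩
    exact ⟨h1.symm, h1 ▸ h2⟩
  trans := by
    rintro x y z ⟨h1, h2⟩ ⟨h3, h4⟩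
    exact ⟨h1.trans h3, h2⟩

/-- The generator `ō_i`: rook dots `i` and `i'`, blocks `{j,j'}` for `j ≠ i`. -/
def obar {n : ℕ} (i : Fin n) : RP n := obarS {i}

/-- For an index `i` of a simple transposition (`1 ≤ i ≤ n-1`, zero-based `Fin (n-1)`),
the smaller of the two swapped points. -/
def lo {n : ℕ} (i : Fin (n - 1)) : Fin n := ⟨i.val, by have := i.isLt; omega⟩
/-- The larger of the two swapped points. -/
def hi {n : ℕ} (i : Fin (n - 1)) : Fin n := ⟨i.val + 1, by have := i.isLt; omega⟩

/-- The generator `s̄_i`: the simple transposition with blocks `{i,(i+1)'}`, `{i+1,i'}`,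
and `{j,j'}` for other `j`. -/
def sbar {n : ℕ} (i : Fin (n - 1)) : RP n := permRP (Equiv.swap (lo i) (hi i))

/-- The generator `q̄_i = t̄_{i,i+1}`. -/
def qbar {n : ℕ} (i : Fin (n - 1)) : RP n := tbar (lo i) (hi i)

/-- Membership in the subsemigroup generated by a subset `X`. -/
inductive SgGen {M : Type*} [Mul M] (X : Set M) : M → Prop
  | incl {x : M} : x ∈ X → SgGen X x
  | mul {a b : M} : SgGen X a → SgGen X b → SgGen X (a * b)

/-- Membership in the submonoid generated by a subset `X`. -/
inductive MonGen {M : Type*} [Mul M] [One M] (X : Set M) : M → Prop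
  | one : MonGen X 1
  | incl {x : M} : x ∈ X → MonGen X x
  | mul {a b : M} : MonGen X a → MonGen X b → MonGen X (a * b)

/-- Evaluation of a word under a map on the letters (the product, in order, of the images
of the letters; the empty word evaluates to `1`). -/
def evalWord {X M : Type*} [Mul M] [One M] (f : X → M) : List X → M
  | [] => 1
  | [x] => f x
  | x :: y :: w => f x * evalWord f (y :: w)

/-- The congruence on the free monoid of words (with product = concatenation) generated
by a set of pairs `R`.  Restricted to nonempty words it is the congruence on the free
semigroup generated by `R`. -/
inductive CongGen {X : Type*} (R : List X → List X → Prop) : List X → List X → Prop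
  | rel {u v : List X} : R u v → CongGen R u v
  | refl (u : List X) : CongGen R u u
  | symm {u v : List X} : CongGen R u v → CongGen R v u
  | trans {u v w : List X} : CongGen R u v → CongGen R v w → CongGen R u w
  | mul {u v u' v' : List X} : CongGen R u v → CongGen R u' v' → CongGen R (u ++ u') (v ++ v')


/-! ## The alphabet E ∪ T ∪ O and the relations (R1)–(R17) -/

/-- The alphabet `E ∪ T ∪ O`: letters `e_i` (`i ∈ [n]`), `t_ij` (`1 ≤ i < j ≤ n`,
with the convention `t_ij = t_ji`), and `o_i` (`i ∈ [n]`). -/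
inductive ETO (n : ℕ) : Type
  | e : Fin n → ETO n
  | t : (i j : Fin n) → i < j → ETO n
  | o : Fin n → ETO n

/-- The letter `t_ij = t_ji`, for distinct `i, j`. -/
def tg {n : ℕ} (i j : Fin n) (h : i ≠ j) : ETO n :=
  if hlt : i < j then ETO.t i j hlt else ETO.t j i (h.symm.lt_of_le (not_lt.mp hlt))

/-- The letter `t_ij` when `i ≠ j`, and the empty word when `i = j`. -/
def tgd {n : ℕ} (i j : Fin n) : List (ETO n) :=
  if h : i = j then [] else [tg i j h]

/-- `x` is a letter of `E ∪ T`. -/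
def ETO.isET {n : ℕ} : ETO n → Prop
  | .o _ => False
  | _ => True

/-- `x` is a letter of `O`. -/
def ETO.isO {n : ℕ} : ETO n → Prop
  | .o _ => True
  | _ => False

/-- The relations (R1)–(R17). -/
inductive RelETO (n : ℕ) : List (ETO n) → List (ETO n) → Prop
  | r1 (i : Fin n) : RelETO n [.e i, .e i] [.e i]
  | r2 (i j : Fin n) (h : i ≠ j) : RelETO n [.e i, .e j] [.e j, .e i]
  | r3 (i j : Fin n) (h : i ≠ j) : RelETO n [tg i j h, tg i j h] [tg i j h]
  | r4 (i j k l : Fin n) (hij : i ≠ j) (hkl : k ≠ l) :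
      RelETO n [tg i j hij, tg k l hkl] [tg k l hkl, tg i j hij]
  | r5 (i j k : Fin n) (hij : i ≠ j) (hjk : j ≠ k) (hik : i ≠ k) :
      RelETO n [tg i j hij, tg j k hjk] [tg j k hjk, tg k i hik.symm]
  | r6 (i j k : Fin n) (hij : i ≠ j) (hki : k ≠ i) (hkj : k ≠ j) :
      RelETO n [tg i j hij, .e k] [.e k, tg i j hij]
  | r7 (i j k : Fin n) (hij : i ≠ j) (hk : k = i ∨ k = j) :
      RelETO n [tg i j hij, .e k, tg i j hij] [tg i j hij]
  | r8 (i j k : Fin n) (hij : i ≠ j) (hk : k = i ∨ k = j) :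
      RelETO n [.e k, tg i j hij, .e k] [.e k]
  | r9 (i j k : Fin n) (hij : i ≠ j) (hjk : j ≠ k) (hik : i ≠ k) :
      RelETO n [.e k, tg k i hik.symm, .e i, tg i j hij, .e j, tg j k hjk, .e k]
               [.e k, tg k j hjk.symm, .e j, tg j i hij.symm, .e i, tg i k hik, .e k]
  | r10 (i j k l : Fin n) (hij : i ≠ j) (hik : i ≠ k) (hil : i ≠ l)
        (hjk : j ≠ k) (hjl : j ≠ l) (hkl : k ≠ l) :
      RelETO n [.e k, tg k i hik.symm, .e i, tg i j hij, .e j, tg j l hjl, .e l,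
                  tg l k hkl.symm, .e k]
               [.e k, tg k l hkl, .e l, tg l i hil.symm, .e i, tg i j hij, .e j,
                  tg j k hjk, .e k]
  | r11 (i : Fin n) : RelETO n [.o i, .o i] [.o i]
  | r12 (i j : Fin n) (h : i ≠ j) : RelETO n [.o i, .o j] [.o j, .o i]
  | r13 (i j : Fin n) (h : i ≠ j) : RelETO n [.o i, .e j] [.e j, .o i]
  | r14 (i : Fin n) : RelETO n [.o i, .e i, .o i] [.o i]
  | r15 (i : Fin n) : RelETO n [.e i, .o i, .e i] [.e i]
  | r16 (i j k : Fin n) (hij : i ≠ j) : RelETO n [tg i j hij, .o k] [.o k, tg i j hij]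
  | r17a (i j : Fin n) (h : i ≠ j) : RelETO n [tg i j h, .o i] [.o i, .o j]
  | r17b (i j : Fin n) (h : i ≠ j) : RelETO n [tg i j h, .o j] [.o i, .o j]

/-- The map `Φ` on letters. -/
def phiLetter {n : ℕ} : ETO n → RP n
  | .e i => ebar i
  | .t i j _ => tbar i j
  | .o i => obar i

/-- The homomorphism `Φ : (E ∪ T ∪ O)⁺ → RP_n`. -/
def PhiETO {n : ℕ} : List (ETO n) → RP n := evalWord phiLetter

/-- For `A = {i₁ < ⋯ < i_k} ⊆ [n]`, the word `o_A = o_{i₁} ⋯ o_{i_k}`. -/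
def oWord {n : ℕ} (A : Finset (Fin n)) : List (ETO n) :=
  (A.sort (· ≤ ·)).map ETO.o

/-- The chain of `t`-letters along consecutive members of a list. -/
def tChain {n : ℕ} : List (Fin n) → List (ETO n)
  | a :: b :: rest => tgd a b ++ tChain (b :: rest)
  | _ => []

/-- For `A = {i₁ < ⋯ < i_k} ⊆ [n]`, the word `t_A = t_{i₁i₂} t_{i₂i₃} ⋯ t_{i_{k-1}i_k}`
(the empty word if `|A| ≤ 1`). -/
def tWord {n : ℕ} (A : Finset (Fin n)) : List (ETO n) :=
  tChain (A.sort (· ≤ ·))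

/-- The word `e_ij = e_i t_ij e_j` for distinct `i, j`. -/
def eWord {n : ℕ} (i j : Fin n) (h : i ≠ j) : List (ETO n) :=
  [ETO.e i, tg i j h, ETO.e j]

/-- `α` lies in (the copy inside `RP_n` of) the symmetric inverse monoid `I_n`:
no rook dots, and every block has at most one upper and at most one lower point. -/
def RP.MemIn {n : ℕ} (α : RP n) : Prop :=
  α.NoDots ∧ (∀ i j : Fin n, α.rel (Sum.inl i) (Sum.inl j) → i = j) ∧
    (∀ i j : Fin n, α.rel (Sum.inr i) (Sum.inr j) → i = j)

/-! ### The symmetric group presented by transpositions -/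

/-- A family `x i j` satisfying the defining relations of the transpositions `(i j)`. -/
structure TranspSys {ι M : Type*} [Monoid M] (x : ι → ι → M) : Prop where
  self : ∀ i, x i i = 1
  comm : ∀ i j, x i j = x j i
  sq : ∀ i j, x i j * x i j = 1
  tri : ∀ i j l, i ≠ j → j ≠ l → i ≠ l → x i j * x j l = x l i * x i j

namespace TranspSys

variable {ι M : Type*} [Monoid M] {x : ι → ι → M}

theorem conj (h : TranspSys x) (i j l : ι) (hij : i ≠ j) (hjl : j ≠ l) (hil : i ≠ l) :
    x l i = x i j * x j l * x i j := by
  rw [h.tri i j l hij hjl hil, mul_assoc, h.sq, mul_one]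

/-- Disjoint transpositions commute: write `(b c)` as the conjugate of `(m c)` by `(b m)` and
push `(m a)` through the three factors. -/
theorem disj (h : TranspSys x) (m a b c : ι) (hma : m ≠ a) (hmb : m ≠ b) (hmc : m ≠ c)
    (hab : a ≠ b) (hac : a ≠ c) (hbc : b ≠ c) : x m a * x b c = x b c * x m a := by
  have e1 : x b c = x b m * x m c * x b m := by
    rw [h.comm b c]; exact h.conj b m c hmb.symm hmc hbc
  have e2 : x b c = x b a * x a c * x b a := by
    rw [h.comm b c]; exact h.conj b a c hab.symm hac hbc
  have e3 : x m a * x b m = x b a * x m a := by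
    have := h.tri a m b hma.symm hmb hab
    rwa [h.comm a m, h.comm m b] at this
  have e4 : x m a * x m c = x a c * x m a := by
    have := h.tri a m c hma.symm hmc hac
    rwa [h.comm a m, h.comm c a] at this
  calc x m a * x b c = (x m a * x b m) * x m c * x b m := by rw [e1]; simp only [mul_assoc]
    _ = x b a * (x m a * x m c) * x b m := by rw [e3]; simp only [mul_assoc]
    _ = x b a * x a c * (x m a * x b m) := by rw [e4]; simp only [mul_assoc]
    _ = x b c * x m a := by rw [e3, e2]; simp only [mul_assoc]

/-- The value of a word in the transpositions. -/
def wd (x : ι → ι → M) (w : List (ι × ι)) : M := (w.map fun p => x p.1 p.2).prod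

@[simp] theorem wd_nil (x : ι → ι → M) : wd x [] = 1 := rfl

@[simp] theorem wd_cons (x : ι → ι → M) (p : ι × ι) (w : List (ι × ι)) :
    wd x (p :: w) = x p.1 p.2 * wd x w := by simp [wd]

@[simp] theorem wd_append (x : ι → ι → M) (w w' : List (ι × ι)) :
    wd x (w ++ w') = wd x w * wd x w' := by simp [wd]

theorem wd_reverse (h : TranspSys x) (w : List (ι × ι)) : wd x w * wd x w.reverse = 1 := by
  induction w with
  | nil => simp
  | cons p w ih =>
    rw [List.reverse_cons, wd_append, wd_cons, wd_cons, wd_nil, mul_one, mul_assoc,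
      ← mul_assoc (wd x w), ih, one_mul, h.sq]

theorem wd_reverse_left (h : TranspSys x) (w : List (ι × ι)) :
    wd x w.reverse * wd x w = 1 := by
  simpa using h.wd_reverse w.reverse

/-- A word over `S ∪ {m}` can be rewritten so that `m` occurs only in its last letter. -/
theorem collect [DecidableEq ι] (h : TranspSys x) (S : Finset ι) (m : ι)
    (w : List (ι × ι)) (hw : ∀ p ∈ w, p.1 ∈ insert m S ∧ p.2 ∈ insert m S) :
    ∃ w' : List (ι × ι), ∃ a ∈ insert m S,
      (∀ p ∈ w', (p.1 ∈ S ∧ p.1 ≠ m) ∧ (p.2 ∈ S ∧ p.2 ≠ m)) ∧ wd x w = wd x w' * x m a := by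
  induction w using List.reverseRecOn with
  | nil => exact ⟨[], m, by simp, by simp, by simp [h.self]⟩
  | append_singleton w p ih =>
    obtain ⟨w', a, ha, hw', e⟩ := ih (fun q hq => hw q (by simp [hq]))
    obtain ⟨b, c⟩ := p
    have hb : b ∈ insert m S := (hw (b, c) (by simp)).1
    have hc : c ∈ insert m S := (hw (b, c) (by simp)).2
    simp only [wd_append, e, wd_cons, wd_nil, mul_one, mul_assoc]
    have key : ∀ b c : ι, b ∈ insert m S → c ∈ insert m S → b ≠ c → c ≠ m →
        ∃ u : List (ι × ι), ∃ a' ∈ insert m S,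
        (∀ p ∈ u, (p.1 ∈ S ∧ p.1 ≠ m) ∧ (p.2 ∈ S ∧ p.2 ≠ m)) ∧
          x m a * x b c = wd x u * x m a' := by
      intro b c hb hc hbc hcm
      have hcS : c ∈ S := by simpa [hcm] using hc
      by_cases ham : a = m
      · subst ham
        by_cases hbm : b = a
        · subst hbm
          exact ⟨[], c, hc, by simp, by simp [h.self]⟩
        · have hbS : b ∈ S := by simpa [hbm] using hb
          exact ⟨[(b, c)], a, by simp, by simp [hbS, hcS, hbm, hcm], by simp [h.self]⟩
      have haS : a ∈ S := by simpa [ham] using ha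
      by_cases hbm : b = m
      · subst hbm
        by_cases hac : a = c
        · subst hac
          exact ⟨[], b, by simp, by simp, by simp [h.self, h.sq]⟩
        · refine ⟨[(a, c)], a, ha, by simp [haS, hcS, ham, hcm], ?_⟩
          have := h.tri a b c ham hbc hac
          simp [h.comm b a, this, h.comm c a]
      have hbS : b ∈ S := by simpa [hbm] using hb
      have step : ∀ b c : ι, m ≠ b → b ≠ c → m ≠ c →
          x m b * x b c = x b c * x m c := by
        intro b c h1 h2 h3
        rw [h.tri m b c h1 h2 h3, h.tri c m b h3.symm h1 h2.symm, h.comm c m]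
      by_cases hab : a = b
      · subst hab
        exact ⟨[(a, c)], c, hc, by simp [haS, hcS, ham, hcm],
          by simpa using step a c (Ne.symm ham) hbc (Ne.symm hcm)⟩
      by_cases hac : a = c
      · subst hac
        refine ⟨[(a, b)], b, hb, by simp [haS, hbS, ham, hbm], ?_⟩
        rw [h.comm b a]
        simpa using step a b (Ne.symm ham) hbc.symm (Ne.symm hbm)
      · refine ⟨[(b, c)], a, ha, by simp [hbS, hcS, hbm, hcm], ?_⟩
        simpa using h.disj m a b c (Ne.symm ham) (Ne.symm hbm) (Ne.symm hcm) hab hac hbc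
    have key2 : ∃ u : List (ι × ι), ∃ a' ∈ insert m S,
        (∀ p ∈ u, (p.1 ∈ S ∧ p.1 ≠ m) ∧ (p.2 ∈ S ∧ p.2 ≠ m)) ∧
          x m a * x b c = wd x u * x m a' := by
      by_cases hbc : b = c
      · subst hbc
        exact ⟨[], a, ha, by simp, by simp [h.self]⟩
      by_cases hcm : c = m
      · rw [h.comm b c]
        exact key c b hc hb (Ne.symm hbc) (fun hbm => hbc (hbm.trans hcm.symm))
      · exact key b c hb hc hbc hcm
    obtain ⟨u, a', ha', hu, eu⟩ := key2
    refine ⟨w' ++ u, a', ha', ?_, ?_⟩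
    · intro p hp
      rcases List.mem_append.mp hp with hp | hp
      · exact hw' p hp
      · exact hu p hp
    · rw [eu, wd_append, mul_assoc]

theorem swapSys (ι : Type*) [DecidableEq ι] :
    TranspSys (fun i j : ι => Equiv.swap i j) where
  self i := by simp [Equiv.Perm.one_def]
  comm i j := Equiv.swap_comm i j
  sq i j := by simp
  tri i j l hij hjl hil := by
    ext a
    simp only [Equiv.Perm.mul_apply, Equiv.swap_apply_def]
    grind

theorem prodSys [DecidableEq ι] (h : TranspSys x) :
    TranspSys (fun i j : ι => ((x i j, Equiv.swap i j) : M × Equiv.Perm ι)) where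
  self i := Prod.ext (h.self i) ((swapSys ι).self i)
  comm i j := Prod.ext (h.comm i j) ((swapSys ι).comm i j)
  sq i j := Prod.ext (h.sq i j) ((swapSys ι).sq i j)
  tri i j l a b c := Prod.ext (h.tri i j l a b c) ((swapSys ι).tri i j l a b c)

theorem wd_prod {M' : Type*} [Monoid M'] (y : ι → ι → M') (w : List (ι × ι)) :
    wd (fun i j => (x i j, y i j)) w = (wd x w, wd y w) := by
  induction w with
  | nil => rfl
  | cons p w ih => simp [ih]

theorem wd_swap_fix [DecidableEq ι] (m : ι) (w : List (ι × ι))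
    (hw : ∀ p ∈ w, p.1 ≠ m ∧ p.2 ≠ m) : wd (fun i j : ι => Equiv.swap i j) w m = m := by
  induction w with
  | nil => simp
  | cons p w ih =>
    rw [wd_cons, Equiv.Perm.mul_apply, ih (fun q hq => hw q (by simp [hq]))]
    have := hw p (by simp)
    exact Equiv.swap_apply_of_ne_of_ne this.1.symm this.2.symm

theorem wd_eq_one [DecidableEq ι] (h : TranspSys x) (S : Finset ι) :
    ∀ w : List (ι × ι), (∀ p ∈ w, p.1 ∈ S ∧ p.2 ∈ S) →
      wd (fun i j : ι => Equiv.swap i j) w = 1 → wd x w = 1 := by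
  induction S using Finset.induction with
  | empty =>
    intro w hw _
    cases w with
    | nil => rfl
    | cons p w => exact absurd (hw p (by simp)).1 (by simp)
  | insert m S hm ih =>
    intro w hw h1
    obtain ⟨w', a, ha, hw', e⟩ := h.prodSys.collect S m w hw
    rw [wd_prod, wd_prod, h1] at e
    have e1 : wd x w = wd x w' * x m a := congrArg Prod.fst e
    have e2 : 1 = wd (fun i j : ι => Equiv.swap i j) w' * Equiv.swap m a := congrArg Prod.snd e
    have e3 := congrArg (fun π : Equiv.Perm ι => π a) e2
    simp only [Equiv.Perm.one_apply, Equiv.Perm.mul_apply, Equiv.swap_apply_right] at e3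
    rw [wd_swap_fix m w' (fun p hp => ⟨(hw' p hp).1.2, (hw' p hp).2.2⟩)] at e3
    subst e3
    rw [e1, h.self, mul_one]
    refine ih w' (fun p hp => ⟨(hw' p hp).1.1, (hw' p hp).2.1⟩) ?_
    rw [Equiv.swap_self] at e2
    exact e2.symm

/-- The transposition relations present the symmetric group: words with the same permutation
have the same value. -/
theorem wd_eq [DecidableEq ι] [Fintype ι] (h : TranspSys x) (w w' : List (ι × ι))
    (hw : wd (fun i j : ι => Equiv.swap i j) w = wd (fun i j : ι => Equiv.swap i j) w') :
    wd x w = wd x w' := by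
  have := h.wd_eq_one Finset.univ (w ++ w'.reverse) (by simp)
    (by rw [wd_append, hw, (swapSys ι).wd_reverse])
  rw [wd_append] at this
  calc wd x w = wd x w * (wd x w'.reverse * wd x w') := by rw [h.wd_reverse_left, mul_one]
    _ = wd x w' := by rw [← mul_assoc, this, one_mul]

theorem exists_word [DecidableEq ι] [Fintype ι] (π : Equiv.Perm ι) :
    ∃ w : List (ι × ι), wd (fun i j : ι => Equiv.swap i j) w = π := by
  induction π using Equiv.Perm.swap_induction_on with
  | one => exact ⟨[], rfl⟩
  | swap_mul f a b _ ih =>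
    obtain ⟨w, rfl⟩ := ih
    exact ⟨(a, b) :: w, by simp⟩

theorem exists_hom [DecidableEq ι] [Fintype ι] (h : TranspSys x) :
    ∃ ψ : Equiv.Perm ι →* M, ∀ i j, ψ (Equiv.swap i j) = x i j := by
  choose c hc using exists_word (ι := ι)
  refine ⟨⟨⟨fun π => wd x (c π), ?_⟩, ?_⟩, ?_⟩
  · exact h.wd_eq _ [] (by rw [hc]; rfl)
  · intro π ρ
    change _ = wd x (c π) * wd x (c ρ)
    rw [← wd_append]
    exact h.wd_eq _ _ (by rw [wd_append, hc, hc, hc])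
  · intro i j
    have := h.wd_eq (c (Equiv.swap i j)) [(i, j)] (by rw [hc]; simp)
    exact this.trans (by simp)

end TranspSys

/-! ### The singular part of the symmetric inverse monoid -/

/-- The relations between the elements `g i j = e_i t_ij e_j` (with `g i i = e_i`). The element
`g i j` stands for the partial permutation that is undefined at `i`, moves `j` to `i`, and fixes
every other point: the hole at `i` travels to `j`. -/
structure GSys {n : ℕ} {K : Type*} [Monoid K] (g : Fin n → Fin n → K) : Prop where
  comm : ∀ i j, g i i * g j j = g j j * g i i
  left : ∀ i j, g i i * g i j = g i j
  right : ∀ i j, g i j * g j j = g i j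
  inv : ∀ i j, g i j * g j i = g i i
  slide : ∀ i j k, k ≠ i →
    g k k * g i j = g i j * g (Equiv.swap i j k) (Equiv.swap i j k)
  kill : ∀ i j, g j j * g i j = g j j * g i i
  r9 : ∀ i j k, i ≠ j → j ≠ k → i ≠ k →
    g k i * g i j * g j k = g k j * g j i * g i k
  r10 : ∀ i j k l, i ≠ j → i ≠ k → i ≠ l → j ≠ k → j ≠ l → k ≠ l →
    g k i * g i j * g j l * g l k = g k l * g l i * g i j * g j k

namespace GSys

variable {n : ℕ} {K : Type*} [Monoid K] {g : Fin n → Fin n → K}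

/-- The loop `k → i → j → k` of the hole, which transposes `i` and `j`. -/
def loop (g : Fin n → Fin n → K) (k i j : Fin n) : K := g k i * g i j * g j k

theorem loop_left (h : GSys g) (k i j : Fin n) : g k k * loop g k i j = loop g k i j := by
  simp only [loop, ← mul_assoc, h.left]

theorem loop_right (h : GSys g) (k i j : Fin n) : loop g k i j * g k k = loop g k i j := by
  simp only [loop, mul_assoc, h.right]

theorem loop_mul (h : GSys g) (k i j l : Fin n) :
    loop g k i j * loop g k j l = g k i * g i j * g j l * g l k := by
  simp only [loop, mul_assoc]
  rw [← mul_assoc (g j k), h.inv, ← mul_assoc (g j j), h.left]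

theorem loop_self (h : GSys g) (k i : Fin n) : loop g k i i = g k k := by
  simp only [loop, h.right, h.inv]

theorem loop_comm (h : GSys g) (k i j : Fin n) (hi : i ≠ k) (hj : j ≠ k) :
    loop g k i j = loop g k j i := by
  by_cases hij : i = j
  · rw [hij]
  · exact h.r9 i j k hij hj hi

theorem loop_sq (h : GSys g) (k i j : Fin n) (hi : i ≠ k) (hj : j ≠ k) :
    loop g k i j * loop g k i j = g k k := by
  conv_lhs => rw [h.loop_comm k i j hi hj]
  rw [h.loop_comm k j i hj hi]
  nth_rewrite 2 [h.loop_comm k i j hi hj]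
  rw [h.loop_mul, mul_assoc (g k i), h.inv, h.right, h.inv]

theorem loop_tri (h : GSys g) (k i j l : Fin n) (hi : i ≠ k) (hj : j ≠ k) (hl : l ≠ k)
    (hij : i ≠ j) (hjl : j ≠ l) (hil : i ≠ l) :
    loop g k i j * loop g k j l = loop g k l i * loop g k i j := by
  rw [h.loop_mul, h.loop_mul]
  exact h.r10 i j k l hij hi hil hj hjl (Ne.symm hl)

/-- The permutations of the points other than `k` act as loops of a hole based at `k`. -/
theorem exists_psi (h : GSys g) (k : Fin n) :
    ∃ ψ : Equiv.Perm {i : Fin n // i ≠ k} → K, ψ 1 = g k k ∧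
      (∀ π ρ, ψ (π * ρ) = ψ π * ψ ρ) ∧
      ∀ i j : {i : Fin n // i ≠ k}, ψ (Equiv.swap i j) = loop g k i j := by
  let C := {z : K // g k k * z = z ∧ z * g k k = z}
  let _ : Monoid C :=
    { mul := fun a b => ⟨a.1 * b.1, by rw [← mul_assoc, a.2.1], by rw [mul_assoc, b.2.2]⟩
      one := ⟨g k k, h.left k k, h.left k k⟩
      mul_assoc := fun a b c => Subtype.ext (mul_assoc a.1 b.1 c.1)
      one_mul := fun a => Subtype.ext a.2.1
      mul_one := fun a => Subtype.ext a.2.2 }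
  let x : {i : Fin n // i ≠ k} → {i : Fin n // i ≠ k} → C := fun i j =>
    ⟨loop g k i j, h.loop_left k i j, h.loop_right k i j⟩
  have hx : TranspSys x :=
    { self := fun i => Subtype.ext (h.loop_self k i)
      comm := fun i j => Subtype.ext (h.loop_comm k i j i.2 j.2)
      sq := fun i j => Subtype.ext (h.loop_sq k i j i.2 j.2)
      tri := fun i j l hij hjl hil => Subtype.ext (h.loop_tri k i j l i.2 j.2 l.2
        (fun e => hij (Subtype.ext e)) (fun e => hjl (Subtype.ext e))
        (fun e => hil (Subtype.ext e))) }
  obtain ⟨ψ, hψ⟩ := hx.exists_hom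
  refine ⟨fun π => (ψ π).1, ?_, ?_, ?_⟩
  · change (ψ 1).1 = _
    rw [map_one]; rfl
  · intro π ρ
    change (ψ (π * ρ)).1 = _
    rw [map_mul]; rfl
  · intro i j
    change (ψ (Equiv.swap i j)).1 = _
    rw [hψ]

/-- The element deleting all the points of a list. -/
def eL {k : Fin n} (g : Fin n → Fin n → K) (As : List {i : Fin n // i ≠ k}) : K :=
  (As.map fun i => g i i).prod

@[simp] theorem eL_nil {k : Fin n} : eL g ([] : List {i : Fin n // i ≠ k}) = 1 := rfl

@[simp] theorem eL_cons {k : Fin n} (a : {i : Fin n // i ≠ k})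
    (As : List {i : Fin n // i ≠ k}) : eL g (a :: As) = g a a * eL g As := by simp [eL]

theorem eL_append {k : Fin n} (As Bs : List {i : Fin n // i ≠ k}) :
    eL g (As ++ Bs) = eL g As * eL g Bs := by simp [eL]

theorem e_eL_comm (h : GSys g) {k : Fin n} (i : Fin n) (As : List {i : Fin n // i ≠ k}) :
    g i i * eL g As = eL g As * g i i := by
  induction As with
  | nil => simp
  | cons a As ih => rw [eL_cons, ← mul_assoc, h.comm, mul_assoc, ih, mul_assoc]

theorem eL_absorb (h : GSys g) {k : Fin n} (i : {i : Fin n // i ≠ k})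
    (As : List {i : Fin n // i ≠ k}) (hi : i ∈ As) : eL g As * g i i = eL g As := by
  induction As with
  | nil => simp at hi
  | cons a As ih =>
    rcases List.mem_cons.mp hi with rfl | hi
    · rw [← h.e_eL_comm, eL_cons, ← mul_assoc, h.left]
    · rw [eL_cons, mul_assoc, ih hi]

theorem eL_absorb_eL (h : GSys g) {k : Fin n} (As Bs : List {i : Fin n // i ≠ k})
    (hB : ∀ i ∈ Bs, i ∈ As) : eL g As * eL g Bs = eL g As := by
  induction Bs with
  | nil => simp
  | cons b Bs ih =>
    rw [eL_cons, ← mul_assoc, h.eL_absorb b As (hB b (by simp)),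
      ih (fun i hi => hB i (by simp [hi]))]

theorem eL_comm (h : GSys g) {k : Fin n} (As Bs : List {i : Fin n // i ≠ k}) :
    eL g As * eL g Bs = eL g Bs * eL g As := by
  induction As with
  | nil => simp
  | cons a As ih => rw [eL_cons, mul_assoc, ih, ← mul_assoc, h.e_eL_comm, mul_assoc]

theorem eL_congr (h : GSys g) {k : Fin n} (As Bs : List {i : Fin n // i ≠ k})
    (hAB : ∀ i, i ∈ As ↔ i ∈ Bs) : eL g As = eL g Bs := by
  rw [← h.eL_absorb_eL As Bs (fun i hi => (hAB i).2 hi), h.eL_comm,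
    h.eL_absorb_eL Bs As (fun i hi => (hAB i).1 hi)]

theorem e_loop (h : GSys g) (k a b i : Fin n) (ha : a ≠ k) (hb : b ≠ k) (hi : i ≠ k) :
    g i i * loop g k a b =
      loop g k a b * g (Equiv.swap a b i) (Equiv.swap a b i) := by
  simp only [loop, ← mul_assoc]
  rw [h.slide k a i hi, mul_assoc (g k a), h.slide a b _ (by
    simp only [Equiv.swap_apply_def]; grind), ← mul_assoc, mul_assoc _ _ (g b k),
    h.slide b k _ (by simp only [Equiv.swap_apply_def]; grind), ← mul_assoc]
  have : Equiv.swap b k (Equiv.swap a b (Equiv.swap k a i)) = Equiv.swap a b i := by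
    simp only [Equiv.swap_apply_def]; grind
  rw [this]

section psi

variable {k : Fin n} {ψ : Equiv.Perm {i : Fin n // i ≠ k} → K}

theorem psi_left (h1 : ψ 1 = g k k) (hm : ∀ π ρ, ψ (π * ρ) = ψ π * ψ ρ)
    (π : Equiv.Perm {i : Fin n // i ≠ k}) : g k k * ψ π = ψ π := by
  rw [← h1, ← hm, one_mul]

theorem psi_e (h : GSys g) (h1 : ψ 1 = g k k) (hm : ∀ π ρ, ψ (π * ρ) = ψ π * ψ ρ)
    (hs : ∀ i j : {i : Fin n // i ≠ k}, ψ (Equiv.swap i j) = loop g k i j)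
    (π : Equiv.Perm {i : Fin n // i ≠ k}) (i : {i : Fin n // i ≠ k}) :
    ψ π * g i i = g (π i) (π i) * ψ π := by
  induction π using Equiv.Perm.swap_induction_on with
  | one => rw [h1]; exact h.comm _ _
  | swap_mul f a b _ ih =>
    rw [hm, mul_assoc, ih, ← mul_assoc, ← mul_assoc, hs]
    congr 1
    rw [h.e_loop k a b _ a.2 b.2 (((Equiv.swap a b * f) i).2)]
    have : Equiv.swap (a : Fin n) b ((Equiv.swap a b * f) i : {i : Fin n // i ≠ k}) = f i := by
      simp only [Equiv.Perm.mul_apply]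
      have h3 : ∀ c : {i : Fin n // i ≠ k},
          Equiv.swap (a : Fin n) b ((Equiv.swap a b c : {i : Fin n // i ≠ k}) : Fin n) = c := by
        intro c
        simp only [Equiv.swap_apply_def]
        grind
      exact h3 _
    rw [this]

/-- Permuting deleted points has no effect. -/
theorem eL_psi (h : GSys g) (h1 : ψ 1 = g k k) (hm : ∀ π ρ, ψ (π * ρ) = ψ π * ψ ρ)
    (hs : ∀ i j : {i : Fin n // i ≠ k}, ψ (Equiv.swap i j) = loop g k i j)
    (As : List {i : Fin n // i ≠ k}) :
    ∀ (N : ℕ) (ρ : Equiv.Perm {i : Fin n // i ≠ k}), ρ.support.card ≤ N →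
      (∀ i, ρ i ≠ i → i ∈ As) → eL g As * ψ ρ = eL g As * g k k := by
  intro N
  induction N with
  | zero =>
    intro ρ hρ _
    have : ρ = 1 := by simpa using hρ
    rw [this, h1]
  | succ N ih =>
    intro ρ hρ hA
    by_cases hone : ∀ a, ρ a = a
    · have : ρ = 1 := Equiv.ext hone
      rw [this, h1]
    push Not at hone
    obtain ⟨a, ha⟩ := hone
    have haA := hA a ha
    have hbA := hA (ρ a) (fun e => ha (ρ.injective e))
    have hlt := Equiv.Perm.card_support_swap_mul ha
    have hdec : ρ = Equiv.swap a (ρ a) * (Equiv.swap a (ρ a) * ρ) := by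
      rw [← mul_assoc, Equiv.swap_mul_self, one_mul]
    have hk : eL g As * loop g k a (ρ a) = eL g As * g k k := by
      generalize ρ a = b at hbA
      rw [← h.eL_absorb a As haA, ← h.eL_absorb b As hbA]
      have c1 : ∀ i j : Fin n, ∀ z : K, g i i * (g j j * z) = g j j * (g i i * z) := by
        intro i j z; rw [← mul_assoc, h.comm, mul_assoc]
      have k1 : ∀ i j : Fin n, ∀ z : K, g j j * (g i j * z) = g j j * (g i i * z) := by
        intro i j z; rw [← mul_assoc, h.kill, mul_assoc]
      have l1 : ∀ i j : Fin n, ∀ z : K, g i i * (g i j * z) = g i j * z := by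
        intro i j z; rw [← mul_assoc, h.left]
      have key : g b b * (g a a * loop g k a b) = g b b * (g a a * g k k) := by
        calc g b b * (g a a * loop g k a b)
            = g b b * (g a a * (g k k * (g a b * g b k))) := by
              rw [loop, mul_assoc, k1]
          _ = g k k * (g b b * (g a b * g b k)) := by
              rw [c1 a k, l1, c1 b k]
          _ = g a a * (g b b * (g k k * g b k)) := by
              rw [k1, c1 k b, c1 k a, c1 b a]
          _ = g b b * (g a a * g k k) := by
              rw [h.kill, ← h.comm, l1 b b, c1]
      simp only [mul_assoc] at key ⊢
      rw [key]
    rw [hdec, hm, ← mul_assoc, hs, hk, mul_assoc, psi_left h1 hm]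
    refine ih _ (by omega) (fun i hi => ?_)
    by_cases hia : i = a
    · exact hia ▸ haA
    by_cases hib : i = ρ a
    · exact hib ▸ hbA
    refine hA i (fun e => hi ?_)
    rw [Equiv.Perm.mul_apply, e, Equiv.swap_apply_of_ne_of_ne hia hib]

theorem nf_step (h : GSys g) (hm : ∀ π ρ, ψ (π * ρ) = ψ π * ψ ρ)
    (hs : ∀ i j : {i : Fin n // i ≠ k}, ψ (Equiv.swap i j) = loop g k i j)
    (z : K) (l j : Fin n) (hz :
      ∃ (As : List {i : Fin n // i ≠ k}) (π : Equiv.Perm {i : Fin n // i ≠ k}), z = eL g As * ψ π * g k l) :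
      ∃ (As : List {i : Fin n // i ≠ k}) (π : Equiv.Perm {i : Fin n // i ≠ k}), z * g l j = eL g As * ψ π * g k j := by
  obtain ⟨As, π, rfl⟩ := hz
  by_cases hlk : l = k
  · subst hlk
    exact ⟨As, π, by rw [mul_assoc, h.left]⟩
  by_cases hjl : j = l
  · subst hjl
    exact ⟨As, π, by rw [mul_assoc, h.right]⟩
  by_cases hjk : j = k
  · subst hjk
    exact ⟨As, π, by rw [mul_assoc, h.inv]⟩
  refine ⟨As, π * Equiv.swap ⟨l, hlk⟩ ⟨j, hjk⟩, ?_⟩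
  rw [hm, hs, loop]
  simp only [mul_assoc]
  rw [h.inv, h.right]

theorem nf_mul (h : GSys g) (h1 : ψ 1 = g k k) (hm : ∀ π ρ, ψ (π * ρ) = ψ π * ψ ρ)
    (hs : ∀ i j : {i : Fin n // i ≠ k}, ψ (Equiv.swap i j) = loop g k i j)
    (z : K) (l i j : Fin n) (hz :
      ∃ (As : List {i : Fin n // i ≠ k}) (π : Equiv.Perm {i : Fin n // i ≠ k}), z = eL g As * ψ π * g k l) :
      ∃ (As : List {i : Fin n // i ≠ k}) (π : Equiv.Perm {i : Fin n // i ≠ k}), z * g i j = eL g As * ψ π * g k j := by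
  by_cases hil : i = l
  · subst hil
    exact nf_step h hm hs z i j hz
  obtain ⟨As, π, rfl⟩ := hz
  have hi' : Equiv.swap k l i ≠ k := by
    simp only [Equiv.swap_apply_def]; grind
  -- Delete `i` first; the hole may then travel from `l` to `j` through `i`.
  have key : g k l * g i j =
      g (Equiv.swap k l i) (Equiv.swap k l i) * g k l * g l i * g i j := by
    rw [h.slide k l _ hi', Equiv.swap_apply_self, mul_assoc (g k l), h.kill,
      ← h.comm l i, ← mul_assoc, h.right, mul_assoc, h.left]
  have e : eL g As * ψ π * g k l * g i j =
      eL g (As ++ [π ⟨_, hi'⟩]) * ψ π * g k l * g l i * g i j := by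
    rw [mul_assoc, key, eL_append, eL_cons, eL_nil, mul_one, mul_assoc (eL g As) _ (ψ π),
      ← psi_e h h1 hm hs π ⟨_, hi'⟩]
    simp only [mul_assoc]
  rw [e]
  exact nf_step h hm hs _ i j (nf_step h hm hs _ l i ⟨_, _, rfl⟩)

/-- Normal form: once `k` is deleted, an element is a deletion, followed by a permutation of
the points other than `k`, followed by a move of the hole. -/
theorem nf_closure (h : GSys g) (h1 : ψ 1 = g k k) (hm : ∀ π ρ, ψ (π * ρ) = ψ π * ψ ρ)
    (hs : ∀ i j : {i : Fin n // i ≠ k}, ψ (Equiv.swap i j) = loop g k i j)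
    (s : K) (hsJ : s ∈ Subsemigroup.closure (Set.range fun p : Fin n × Fin n => g p.1 p.2))
    (l : Fin n) :
      ∃ (As : List {i : Fin n // i ≠ k}) (π : Equiv.Perm {i : Fin n // i ≠ k}), g k k * s * g l l = eL g As * ψ π * g k l := by
  have main : ∀ z : K, (∃ l, ∃ (As : List {i : Fin n // i ≠ k}) (π : Equiv.Perm {i : Fin n // i ≠ k}), z = eL g As * ψ π * g k l) →
      ∃ l, ∃ (As : List {i : Fin n // i ≠ k}) (π : Equiv.Perm {i : Fin n // i ≠ k}), z * s = eL g As * ψ π * g k l := by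
    induction hsJ using Subsemigroup.closure_induction with
    | mem x hx =>
      obtain ⟨p, rfl⟩ := hx
      rintro z ⟨l, hz⟩
      exact ⟨p.2, nf_mul h h1 hm hs z l p.1 p.2 hz⟩
    | mul x y _ _ ihx ihy =>
      intro z hz
      rw [← mul_assoc]
      exact ihy _ (ihx z hz)
  obtain ⟨l', hz⟩ := main (g k k) ⟨k, [], 1, by rw [h1, eL_nil, one_mul, h.left]⟩
  exact nf_mul h h1 hm hs _ l' l l hz

end psi

end GSys

/-! ### Partial permutations -/

/-- The partial permutations of `Fin n`, as a monoid under left-to-right composition. -/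
def PE (n : ℕ) := Fin n ≃. Fin n

namespace PE

variable {n : ℕ}

instance : Monoid (PE n) where
  mul σ τ := PEquiv.trans σ τ
  one := PEquiv.refl _
  mul_assoc σ τ ρ := PEquiv.trans_assoc σ τ ρ
  one_mul σ := PEquiv.refl_trans σ
  mul_one σ := PEquiv.trans_refl σ

/-- The value of a partial permutation at a point. -/
def ap (σ : PE n) (a : Fin n) : Option (Fin n) := PEquiv.toFun σ a

/-- The value of the inverse of a partial permutation at a point. -/
def pre (σ : PE n) (a : Fin n) : Option (Fin n) := PEquiv.invFun σ a

theorem ext' {σ τ : PE n} (h : ∀ a, σ.ap a = τ.ap a) : σ = τ := PEquiv.ext h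

theorem pre_eq (σ : PE n) (a b : Fin n) : σ.pre b = some a ↔ σ.ap a = some b :=
  PEquiv.inv σ a b

theorem inj (σ : PE n) {a a' b : Fin n} (h : σ.ap a = some b) (h' : σ.ap a' = some b) :
    a = a' := by
  rw [← pre_eq] at h h'
  exact Option.some.inj (h.symm.trans h')

theorem mul_ap (σ τ : PE n) (a : Fin n) : (σ * τ).ap a = (σ.ap a).bind τ.ap := rfl

@[simp] theorem one_ap (a : Fin n) : (1 : PE n).ap a = some a := rfl

theorem pre_eq_none (σ : PE n) (b : Fin n) : σ.pre b = none ↔ ∀ a, σ.ap a ≠ some b := by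
  rw [Option.eq_none_iff_forall_ne_some]
  simp only [ne_eq, pre_eq]

/-- The partial permutation undefined at `i`, moving `j` to `i` and fixing all other points. -/
def v (i j : Fin n) : PE n :=
  ({ toFun := fun a => if a = i then none else some (Equiv.swap i j a)
     invFun := fun b => if b = j then none else some (Equiv.swap i j b)
     inv := by
       intro a b
       simp only [Equiv.swap_apply_def]
       grind } : Fin n ≃. Fin n)

theorem v_ap (i j a : Fin n) :
    (v i j).ap a = if a = i then none else some (Equiv.swap i j a) := rfl

theorem v_ap_self (i j : Fin n) : (v i j).ap i = none := by simp [v_ap]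

theorem v_ap_right {i j : Fin n} (h : i ≠ j) : (v i j).ap j = some i := by
  simp [v_ap, h.symm]

theorem v_ap_of_ne {i j a : Fin n} (hi : a ≠ i) (hj : a ≠ j) : (v i j).ap a = some a := by
  simp [v_ap, hi, Equiv.swap_apply_of_ne_of_ne hi hj]

theorem v_diag_of_ne {i a : Fin n} (hi : a ≠ i) : (v i i).ap a = some a := v_ap_of_ne hi hi

theorem gsys_v : GSys (v : Fin n → Fin n → PE n) where
  comm i j := by
    apply ext'; intro a
    by_cases hi : a = i <;> by_cases hj : a = j <;>
      simp_all [mul_ap, v_ap]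
  left i j := by
    apply ext'; intro a
    by_cases hi : a = i <;> simp_all [mul_ap, v_ap]
  right i j := by
    apply ext'; intro a
    have : a ≠ i → Equiv.swap i j a ≠ j := by
      intro h1 h2
      exact h1 (by simpa using congrArg (Equiv.swap i j) h2)
    by_cases hi : a = i <;> simp_all [mul_ap, v_ap]
  inv i j := by
    apply ext'; intro a
    have : a ≠ i → Equiv.swap i j a ≠ j := by
      intro h1 h2
      exact h1 (by simpa using congrArg (Equiv.swap i j) h2)
    by_cases hi : a = i <;> simp_all [mul_ap, v_ap, Equiv.swap_comm j i]
  slide i j k hk := by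
    apply ext'; intro a
    by_cases hi : a = i <;> by_cases hj : a = k <;>
      simp_all [mul_ap, v_ap]
  kill i j := by
    apply ext'; intro a
    by_cases hi : a = i
    · by_cases hij : i = j <;> simp_all [mul_ap, v_ap]
    by_cases hj : a = j
    · simp_all [mul_ap, v_ap]
    · simp_all [mul_ap, v_ap, Equiv.swap_apply_of_ne_of_ne]
  r9 i j k h1 h2 h3 := by
    apply ext'; intro a
    by_cases hi : a = i
    · subst hi
      simp_all [mul_ap, v_ap, Ne.symm, Equiv.swap_apply_of_ne_of_ne]
    by_cases hj : a = j
    · subst hj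
      simp_all [mul_ap, v_ap, Ne.symm, Equiv.swap_apply_of_ne_of_ne]
    by_cases hk : a = k
    · subst hk
      simp [mul_ap, v_ap]
    · simp [mul_ap, v_ap, hi, hj, hk, Equiv.swap_apply_of_ne_of_ne]
  r10 i j k l h1 h2 h3 h4 h5 h6 := by
    apply ext'; intro a
    by_cases hi : a = i
    · subst hi
      simp_all [mul_ap, v_ap, Ne.symm, Equiv.swap_apply_of_ne_of_ne]
    by_cases hj : a = j
    · subst hj
      simp_all [mul_ap, v_ap, Ne.symm, Equiv.swap_apply_of_ne_of_ne]
    by_cases hl : a = l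
    · subst hl
      simp_all [mul_ap, v_ap, Ne.symm, Equiv.swap_apply_of_ne_of_ne]
    by_cases hk : a = k
    · subst hk
      simp [mul_ap, v_ap]
    · simp [mul_ap, v_ap, hi, hj, hk, hl, Equiv.swap_apply_of_ne_of_ne]

theorem loop_v_ap {k a b i : Fin n} (ha : a ≠ k) (hb : b ≠ k) (hab : a ≠ b) (hi : i ≠ k) :
    (GSys.loop v k a b).ap i = some (Equiv.swap a b i) := by
  by_cases hia : i = a
  · subst hia
    simp_all [GSys.loop, mul_ap, v_ap, Ne.symm, Equiv.swap_apply_of_ne_of_ne]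
  by_cases hib : i = b
  · subst hib
    simp_all [GSys.loop, mul_ap, v_ap, Ne.symm, Equiv.swap_apply_of_ne_of_ne]
  · simp_all [GSys.loop, mul_ap, v_ap, Ne.symm, Equiv.swap_apply_of_ne_of_ne]

theorem loop_v_ap_self (k a b : Fin n) : (GSys.loop v k a b).ap k = none := by
  simp [GSys.loop, mul_ap, v_ap]

end PE

/-! ### Words in the `g i j` are determined by their partial permutations -/

/-- `J g s σ`: some nonempty word in the letters `(i, j)` evaluates to `s` under `g` and to the
partial permutation `σ` under `PE.v`. -/
inductive J {n : ℕ} {N : Type*} [Monoid N] (g : Fin n → Fin n → N) : N → PE n → Prop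
  | gen (i j : Fin n) : J g (g i j) (PE.v i j)
  | mul {s t : N} {σ τ : PE n} : J g s σ → J g t τ → J g (s * t) (σ * τ)

namespace J

open PE

variable {n : ℕ} {N : Type*} [Monoid N] {g : Fin n → Fin n → N}

theorem exists_none {s : N} {σ : PE n} (h : J g s σ) : ∃ k, σ.ap k = none := by
  induction h with
  | gen i j => exact ⟨i, by simp [v_ap]⟩
  | mul _ _ ih _ =>
    obtain ⟨k, hk⟩ := ih
    exact ⟨k, by simp [mul_ap, hk]⟩

theorem exists_pre_none {s : N} {σ : PE n} (h : J g s σ) : ∃ k, σ.pre k = none := by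
  induction h with
  | gen i j =>
    refine ⟨j, ?_⟩
    rw [pre_eq_none]
    intro a
    simp only [v_ap, Equiv.swap_apply_def]
    grind
  | mul _ _ _ ih =>
    obtain ⟨k, hk⟩ := ih
    refine ⟨k, ?_⟩
    rw [pre_eq_none] at hk ⊢
    intro a
    rw [mul_ap]
    intro h
    obtain ⟨b, _, h2⟩ := Option.bind_eq_some_iff.mp h
    exact hk b h2

theorem move (hg : GSys g) {s : N} {σ : PE n} (h : J g s σ) :
    ∀ {k l : Fin n}, σ.ap k = some l → g k k * s = s * g l l := by
  induction h with
  | gen i j =>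
    intro k l hkl
    rw [v_ap] at hkl
    split_ifs at hkl with hki
    rw [hg.slide i j k hki, Option.some.inj hkl]
  | mul _ _ ih1 ih2 =>
    intro k l hkl
    obtain ⟨b, h1, h2⟩ := Option.bind_eq_some_iff.mp hkl
    rw [← mul_assoc, ih1 h1, mul_assoc, ih2 h2, mul_assoc]

theorem absorb_left (hg : GSys g) {s : N} {σ : PE n} (h : J g s σ) :
    ∀ {k : Fin n}, σ.ap k = none → g k k * s = s := by
  induction h with
  | gen i j =>
    intro k hk
    rw [v_ap] at hk
    split_ifs at hk with hki
    rw [hki, hg.left]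
  | @mul s t σ τ h1 h2 ih1 ih2 =>
    intro k hk
    rw [mul_ap] at hk
    rcases hm : σ.ap k with _ | m
    · rw [← mul_assoc, ih1 hm]
    · rw [hm] at hk
      rw [← mul_assoc, h1.move hg hm, mul_assoc, ih2 hk]

theorem absorb_right (hg : GSys g) {s : N} {σ : PE n} (h : J g s σ) :
    ∀ {l : Fin n}, σ.pre l = none → s * g l l = s := by
  induction h with
  | gen i j =>
    intro l hl
    have : l = j := by
      rw [pre_eq_none] at hl
      by_contra hlj
      have := hl (Equiv.swap i j l)
      simp only [v_ap, Equiv.swap_apply_def] at this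
      grind
    rw [this, hg.right]
  | @mul s t σ τ h1 h2 ih1 ih2 =>
    intro l hl
    rcases hm : τ.pre l with _ | m
    · rw [mul_assoc, ih2 hm]
    · have hm' := (τ.pre_eq _ _).1 hm
      rw [mul_assoc, ← h2.move hg hm', ← mul_assoc, ih1]
      rw [pre_eq_none] at hl ⊢
      intro a ha
      exact hl a (by rw [mul_ap, ha]; exact hm')

theorem gsys_prod (hg : GSys g) :
    GSys (fun i j => ((g i j, v i j) : N × PE n)) where
  comm i j := Prod.ext (hg.comm i j) (gsys_v.comm i j)
  left i j := Prod.ext (hg.left i j) (gsys_v.left i j)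
  right i j := Prod.ext (hg.right i j) (gsys_v.right i j)
  inv i j := Prod.ext (hg.inv i j) (gsys_v.inv i j)
  slide i j k hk := Prod.ext (hg.slide i j k hk) (gsys_v.slide i j k hk)
  kill i j := Prod.ext (hg.kill i j) (gsys_v.kill i j)
  r9 i j k h1 h2 h3 := Prod.ext (hg.r9 i j k h1 h2 h3) (gsys_v.r9 i j k h1 h2 h3)
  r10 i j k l h1 h2 h3 h4 h5 h6 :=
    Prod.ext (hg.r10 i j k l h1 h2 h3 h4 h5 h6) (gsys_v.r10 i j k l h1 h2 h3 h4 h5 h6)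

theorem mem_closure {s : N} {σ : PE n} (h : J g s σ) :
    (s, σ) ∈ Subsemigroup.closure
      (Set.range fun p : Fin n × Fin n => ((g p.1 p.2, v p.1 p.2) : N × PE n)) := by
  induction h with
  | gen i j => exact Subsemigroup.subset_closure ⟨(i, j), rfl⟩
  | mul _ _ ih1 ih2 => exact Subsemigroup.mul_mem _ ih1 ih2

theorem eL_ap {k : Fin n} (As : List {i : Fin n // i ≠ k}) (i : {i : Fin n // i ≠ k}) :
    (GSys.eL (fun i j => ((g i j, v i j) : N × PE n)) As).2.ap i =
      if i ∈ As then none else some (i : Fin n) := by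
  induction As with
  | nil => rfl
  | cons a As ih =>
    rw [GSys.eL_cons, Prod.snd_mul, mul_ap, v_ap]
    by_cases hia : (i : Fin n) = a
    · have : i = a := Subtype.ext hia
      simp [this]
    · have : i ≠ a := fun e => hia (congrArg _ e)
      simp [this, hia, ih]

theorem psi_ap {k : Fin n} {ψ : Equiv.Perm {i : Fin n // i ≠ k} → N × PE n}
    (h1 : ψ 1 = (g k k, v k k)) (hm : ∀ π ρ, ψ (π * ρ) = ψ π * ψ ρ)
    (hs : ∀ i j : {i : Fin n // i ≠ k}, ψ (Equiv.swap i j) =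
      GSys.loop (fun i j => ((g i j, v i j) : N × PE n)) k i j)
    (π : Equiv.Perm {i : Fin n // i ≠ k}) :
    (ψ π).2.ap k = none ∧
      ∀ i : {i : Fin n // i ≠ k}, (ψ π).2.ap i = some ((π⁻¹ i : {i : Fin n // i ≠ k}) : Fin n) := by
  induction π using Equiv.Perm.swap_induction_on with
  | one =>
    rw [h1]
    refine ⟨by simp [v_ap], fun i => ?_⟩
    simp [v_ap, i.2]
  | swap_mul f a b hab ih =>
    rw [hm, hs, Prod.snd_mul]
    refine ⟨by simp [GSys.loop, mul_ap, v_ap], fun i => ?_⟩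
    have : (GSys.loop (fun i j => ((g i j, v i j) : N × PE n)) k a b).2.ap i =
        some ((Equiv.swap a b i : {i : Fin n // i ≠ k}) : Fin n) := by
      refine (loop_v_ap a.2 b.2 (fun e => hab (Subtype.ext e)) i.2).trans ?_
      simp only [Equiv.swap_apply_def, Subtype.ext_iff]
      congr 1
      split_ifs <;> rfl
    rw [mul_ap, this, Option.bind_some, ih.2, mul_inv_rev, Equiv.swap_inv]
    rfl

/-- A product of the `g i j` depends only on the corresponding partial permutation. -/
theorem unique (hg : GSys g) {s s' : N} {σ : PE n} (h : J g s σ) (h' : J g s' σ) : s = s' := by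
  obtain ⟨k, hk⟩ := h.exists_none
  obtain ⟨l, hl⟩ := h.exists_pre_none
  have hG := gsys_prod hg
  obtain ⟨ψ, h1, hm, hs⟩ := hG.exists_psi k
  obtain ⟨As, π, e⟩ := hG.nf_closure h1 hm hs _ h.mem_closure l
  obtain ⟨As', π', e'⟩ := hG.nf_closure h1 hm hs _ h'.mem_closure l
  have hr : ∀ ρ, ψ ρ * (g k k, v k k) = ψ ρ := fun ρ => by rw [← h1, ← hm, mul_one]
  have hl1 : ∀ ρ, (g k k, v k k) * ψ ρ = ψ ρ := fun ρ => by rw [← h1, ← hm, one_mul]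
  have hback : ∀ (Bs : List {i : Fin n // i ≠ k}) (ρ : Equiv.Perm {i : Fin n // i ≠ k}),
      GSys.eL (fun i j => ((g i j, v i j) : N × PE n)) Bs * ψ ρ * (g k l, v k l) *
        (g l k, v l k) = GSys.eL (fun i j => ((g i j, v i j) : N × PE n)) Bs * ψ ρ := by
    intro Bs ρ
    rw [mul_assoc _ _ (g l k, v l k), hG.inv k l, mul_assoc, hr]
  have e2 : (GSys.eL (fun i j => ((g i j, v i j) : N × PE n)) As * ψ π).2 =
      (GSys.eL (fun i j => ((g i j, v i j) : N × PE n)) As' * ψ π').2 := by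
    rw [← hback As π, ← hback As' π', ← e, ← e']
    rfl
  have hval : ∀ i : {i : Fin n // i ≠ k},
      (if i ∈ As then none else some ((π⁻¹ i : {i : Fin n // i ≠ k}) : Fin n)) =
      (if i ∈ As' then none else some ((π'⁻¹ i : {i : Fin n // i ≠ k}) : Fin n)) := by
    intro i
    have := congrArg (fun τ : PE n => τ.ap i) e2
    simp only [Prod.snd_mul, mul_ap, eL_ap] at this
    split_ifs at this ⊢ <;> simp_all [(psi_ap h1 hm hs _).2]
  have hAA : ∀ i, i ∈ As ↔ i ∈ As' := by
    intro i
    have := hval i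
    split_ifs at this <;> simp_all
  have hπ : ∀ i, i ∉ As → π⁻¹ i = π'⁻¹ i := by
    intro i hi
    have := hval i
    rw [if_neg hi, if_neg (fun hc => hi ((hAA i).2 hc))] at this
    exact Subtype.ext (Option.some.inj this)
  have hfin : GSys.eL (fun i j => ((g i j, v i j) : N × PE n)) As * ψ π =
      GSys.eL (fun i j => ((g i j, v i j) : N × PE n)) As' * ψ π' := by
    have hdec : ψ π' = ψ (π' * π⁻¹) * ψ π := by
      rw [← hm, inv_mul_cancel_right]
    rw [hdec, ← hG.eL_congr As As' hAA, ← mul_assoc,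
      GSys.eL_psi hG h1 hm hs As _ (π' * π⁻¹) le_rfl, mul_assoc, hl1]
    intro i hi
    by_contra hiA
    exact hi (by rw [Equiv.Perm.mul_apply, hπ i hiA]; exact π'.apply_symm_apply i)
  have key : g k k * s * g l l = g k k * s' * g l l := by
    have := e.trans ((congrArg (· * (g k l, v k l)) hfin).trans e'.symm)
    exact congrArg Prod.fst this
  rwa [h.absorb_left hg hk, h.absorb_right hg hl, h'.absorb_left hg hk,
    h'.absorb_right hg hl] at key

theorem exists_perm (g : Fin n → Fin n → N) (k : Fin n) (π : Equiv.Perm (Fin n)) :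
    ∃ s τ, J g s τ ∧ ∀ a, τ.ap a = if a = k then none else some (π a) := by
  induction π using Equiv.Perm.swap_induction_on with
  | one => exact ⟨_, _, gen k k, fun a => by simp [v_ap]⟩
  | swap_mul f x y hxy ih =>
    obtain ⟨s, τ, h, hτ⟩ := ih
    have hne : ∀ a, a ≠ k → f a ≠ f k := fun a ha e => ha (f.injective e)
    by_cases hx : f k = x
    · refine ⟨_, _, h.mul (gen x y), fun a => ?_⟩
      by_cases ha : a = k
      · simp [mul_ap, hτ, ha]
      · have := hne a ha
        rw [hx] at this
        simp [mul_ap, hτ, ha, v_ap, this]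
    by_cases hy : f k = y
    · refine ⟨_, _, h.mul (gen y x), fun a => ?_⟩
      by_cases ha : a = k
      · simp [mul_ap, hτ, ha]
      · have := hne a ha
        rw [hy] at this
        simp [mul_ap, hτ, ha, v_ap, this, Equiv.swap_comm y x]
    · refine ⟨_, _, h.mul (((gen (f k) x).mul (gen x y)).mul (gen y (f k))), fun a => ?_⟩
      by_cases ha : a = k
      · simp [mul_ap, hτ, ha]
      · rw [mul_ap, hτ, if_neg ha, Option.bind_some, if_neg ha]
        exact loop_v_ap (Ne.symm hx) (Ne.symm hy) hxy (hne a ha)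

/-- Every partial permutation that is not a permutation is the value of some word. -/
theorem exists_of_none (g : Fin n → Fin n → N) (σ : PE n) (k : Fin n) (hk : σ.ap k = none) :
    ∃ s, J g s σ := by
  classical
  let e : {x // (σ.ap x).isSome} ≃ {x // (σ.pre x).isSome} :=
    { toFun := fun x => ⟨(σ.ap x).get x.2, by
        have : σ.pre ((σ.ap x).get x.2) = some x.1 := by rw [pre_eq]; simp
        rw [this]; rfl⟩
      invFun := fun x => ⟨(σ.pre x).get x.2, by
        have : σ.ap ((σ.pre x).get x.2) = some x.1 := by rw [← pre_eq]; simp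
        rw [this]; rfl⟩
      left_inv := fun x => by
        have : σ.pre ((σ.ap x).get x.2) = some x.1 := by rw [pre_eq]; simp
        simp [this]
      right_inv := fun x => by
        have : σ.ap ((σ.pre x).get x.2) = some x.1 := by rw [← pre_eq]; simp
        simp [this] }
  have he : ∀ a b, σ.ap a = some b → e.extendSubtype a = b := by
    intro a b hab
    rw [e.extendSubtype_apply_of_mem a (by simp [hab])]
    simp [e, hab]
  have main : ∀ A : Finset (Fin n), ∃ s τ, J g s τ ∧
      ∀ a, τ.ap a = if a ∈ A ∨ a = k then none else some (e.extendSubtype a) := by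
    intro A
    induction A using Finset.induction_on with
    | empty => simpa using exists_perm g k e.extendSubtype
    | insert b A _ ih =>
      obtain ⟨s, τ, h, hτ⟩ := ih
      refine ⟨_, _, (gen b b).mul h, fun a => ?_⟩
      simp only [mul_ap, v_ap, Finset.mem_insert]
      grind [Equiv.swap_self]
  obtain ⟨s, τ, h, hτ⟩ := main (Finset.univ.filter fun a => σ.ap a = none)
  have : σ = τ := by
    apply ext'
    intro a
    rw [hτ]
    rcases ha : σ.ap a with _ | b
    · simp [ha]
    · have : a ≠ k := by rintro rfl; simp [hk] at ha
      simp [ha, this, he a b ha]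
  exact ⟨s, this ▸ h⟩

end J

/-! ### The abstract relations -/

/-- The element `e_i t_ij e_j`. -/
def G {n : ℕ} {N : Type*} [Monoid N] (e : Fin n → N)
    (t : Option (Fin n) → Option (Fin n) → N) (i j : Fin n) : N :=
  e i * t (some i) (some j) * e j

/-- A uniform version of the defining relations. The additional point
`none` stands for being a rook dot: `t (some i) (some j)` is `t_ij`, and `t (some i) none` is
`o_i`. -/
structure PRels {n : ℕ} {N : Type*} [Monoid N] (e : Fin n → N)
    (t : Option (Fin n) → Option (Fin n) → N) : Prop where
  t_self : ∀ a, t a a = 1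
  t_symm : ∀ a b, t a b = t b a
  t_idem : ∀ a b, t a b * t a b = t a b
  t_comm : ∀ a b c d, t a b * t c d = t c d * t a b
  t_tri : ∀ a b c, t a b * t b c = t b c * t c a
  e_idem : ∀ i, e i * e i = e i
  e_comm : ∀ i j, e i * e j = e j * e i
  te_comm : ∀ a b k, a ≠ some k → b ≠ some k → t a b * e k = e k * t a b
  tet : ∀ k a, a ≠ some k → t (some k) a * e k * t (some k) a = t (some k) a
  ete : ∀ k a, a ≠ some k → e k * t (some k) a * e k = e k
  r9 : ∀ i j k, i ≠ j → j ≠ k → i ≠ k →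
    G e t k i * G e t i j * G e t j k = G e t k j * G e t j i * G e t i k
  r10 : ∀ i j k l, i ≠ j → i ≠ k → i ≠ l → j ≠ k → j ≠ l → k ≠ l →
    G e t k i * G e t i j * G e t j l * G e t l k =
      G e t k l * G e t l i * G e t i j * G e t j k

namespace PRels

open PE

variable {n : ℕ} {N : Type*} [Monoid N] {e : Fin n → N}
  {t : Option (Fin n) → Option (Fin n) → N}

theorem G_self (h : PRels e t) (i : Fin n) : G e t i i = e i := by
  rw [G, h.t_self, mul_one, h.e_idem]

theorem e_mul_G (h : PRels e t) (i j : Fin n) (hij : i ≠ j) :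
    e j * G e t i j = e i * e j := by
  have : e j * G e t i j = e i * (e j * t (some j) (some i) * e j) := by
    simp only [G, ← mul_assoc]
    rw [h.e_comm j i, h.t_symm]
  rw [this, h.ete j _ (by simpa using hij)]

theorem gsys (h : PRels e t) : GSys (G e t) where
  comm i j := by rw [h.G_self, h.G_self, h.e_comm]
  left i j := by rw [h.G_self, G, ← mul_assoc, ← mul_assoc, h.e_idem]
  right i j := by rw [h.G_self, G, mul_assoc, h.e_idem]
  inv i j := by
    by_cases hij : i = j
    · rw [hij, h.G_self, h.e_idem]
    · have : G e t i j * G e t j i =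
          e i * (t (some j) (some i) * (e j * e j) * t (some j) (some i)) * e i := by
        rw [G, G, h.t_symm (some i)]
        simp only [mul_assoc]
      rw [this, h.e_idem, h.tet j _ (by simpa using hij), h.t_symm,
        h.ete i _ (by simpa using Ne.symm hij), h.G_self]
  slide i j k hk := by
    rw [h.G_self, h.G_self]
    by_cases hij : i = j
    · subst hij
      rw [h.G_self, Equiv.swap_self, Equiv.refl_apply, h.e_comm]
    by_cases hkj : k = j
    · subst hkj
      rw [h.e_mul_G i k hij, Equiv.swap_apply_right, G, mul_assoc, h.e_comm k i, ← mul_assoc,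
        h.ete i _ (by simpa using hk)]
    · rw [Equiv.swap_apply_of_ne_of_ne hk hkj, G, ← mul_assoc, ← mul_assoc, h.e_comm k i,
        mul_assoc (e i) (e k), ← h.te_comm _ _ k (by simpa using Ne.symm hk)
          (by simpa using Ne.symm hkj)]
      simp only [mul_assoc]
      rw [h.e_comm k j]
  kill i j := by
    rw [h.G_self, h.G_self]
    by_cases hij : i = j
    · rw [hij, h.G_self]
    · rw [h.e_mul_G i j hij, h.e_comm]
  r9 := h.r9
  r10 := h.r10

/-- `a` (upper) and `b` (lower) are joined by `σ`, the dot point being joined to itself. -/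
def lk (σ : PE n) (a b : Option (Fin n)) : Prop :=
  (a = none ∧ b = none) ∨ ∃ i j, a = some i ∧ b = some j ∧ σ.ap i = some j

theorem lk_v (i j : Fin n) {a a' : Option (Fin n)} (h : lk (v i j) a a') :
    a ≠ some i ∧ ((a = some j ∧ a' = some i) ∨ (a ≠ some j ∧ a' = a)) := by
  rcases h with ⟨rfl, rfl⟩ | ⟨x, y, rfl, rfl, hxy⟩
  · simp
  · rw [v_ap] at hxy
    split_ifs at hxy with hx
    have hy := Option.some.inj hxy
    by_cases hxj : x = j
    · subst hxj
      rw [Equiv.swap_apply_right] at hy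
      simp [hx, ← hy]
    · rw [Equiv.swap_apply_of_ne_of_ne hx hxj] at hy
      simp [hx, hxj, ← hy]

/-- A `t` may be moved through a partial permutation along the strings. -/
theorem t_move (h : PRels e t) {s : N} {σ : PE n} (hs : J (G e t) s σ) :
    ∀ {a a' b b' : Option (Fin n)}, lk σ a a' → lk σ b b' → t a b * s = s * t a' b' := by
  induction hs with
  | gen i j =>
    intro a a' b b' ha hb
    obtain ⟨hai, ha⟩ := lk_v i j ha
    obtain ⟨hbi, hb⟩ := lk_v i j hb
    have key : ∀ c, c ≠ some i → c ≠ some j → j ≠ i →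
        t (some j) c * G e t i j = G e t i j * t (some i) c := by
      intro c hci hcj hji
      have hji' : (some j : Option (Fin n)) ≠ some i := by simpa using hji
      have hij' : (some i : Option (Fin n)) ≠ some j := Ne.symm hji'
      calc t (some j) c * G e t i j
          = e i * (t c (some j) * t (some j) (some i)) * e j := by
            rw [G, h.t_symm (some i), h.t_symm c, ← mul_assoc, ← mul_assoc,
              h.te_comm _ _ i hji' hci, mul_assoc (e i)]
        _ = e i * t (some i) (some j) * (t (some i) c * e j) := by
            rw [h.t_tri, h.t_symm (some j)]
            simp only [mul_assoc]
        _ = G e t i j * t (some i) c := by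
            rw [h.te_comm _ _ j hij' hcj, G]
            simp only [mul_assoc]
    rcases ha with ⟨rfl, rfl⟩ | ⟨haj, rfl⟩ <;> rcases hb with ⟨rfl, rfl⟩ | ⟨hbj, rfl⟩
    · rw [h.t_self, h.t_self, one_mul, mul_one]
    · exact key _ hbi hbj (by simpa using hai)
    · rw [h.t_symm a', h.t_symm a']
      exact key _ hai haj (by simpa using hbi)
    · rw [G, ← mul_assoc, ← mul_assoc, h.te_comm _ _ i hai hbi, mul_assoc (e i),
        h.t_comm, ← mul_assoc, mul_assoc _ _ (e j), h.te_comm _ _ j haj hbj, ← mul_assoc]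
  | @mul s s' σ τ _ _ ih1 ih2 =>
    have split : ∀ {a a'}, lk (σ * τ) a a' → ∃ m, lk σ a m ∧ lk τ m a' := by
      rintro a a' (⟨rfl, rfl⟩ | ⟨i, j, rfl, rfl, hij⟩)
      · exact ⟨none, Or.inl ⟨rfl, rfl⟩, Or.inl ⟨rfl, rfl⟩⟩
      · obtain ⟨m, h1, h2⟩ := Option.bind_eq_some_iff.mp hij
        exact ⟨some m, Or.inr ⟨i, m, rfl, rfl, h1⟩, Or.inr ⟨m, j, rfl, rfl, h2⟩⟩
    intro a a' b b' ha hb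
    obtain ⟨m, ha1, ha2⟩ := split ha
    obtain ⟨p, hb1, hb2⟩ := split hb
    rw [← mul_assoc, ih1 ha1 hb1, mul_assoc, ih2 ha2 hb2, mul_assoc]

/-! ### Factorisations `x s y` with `x`, `y` products of `t`s -/

/-- The submonoid generated by the `t a b`. -/
def TM (t : Option (Fin n) → Option (Fin n) → N) : Submonoid N :=
  Submonoid.closure (Set.range fun p : Option (Fin n) × Option (Fin n) => t p.1 p.2)

theorem t_mem (t : Option (Fin n) → Option (Fin n) → N) (a b : Option (Fin n)) :
    t a b ∈ TM t := Submonoid.subset_closure ⟨(a, b), rfl⟩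

theorem tm_comm_t (h : PRels e t) {x : N} (hx : x ∈ TM t) (a b : Option (Fin n)) :
    x * t a b = t a b * x := by
  induction hx using Submonoid.closure_induction with
  | mem x hx => obtain ⟨p, rfl⟩ := hx; exact h.t_comm _ _ _ _
  | one => simp
  | mul x y _ _ ihx ihy => rw [mul_assoc, ihy, ← mul_assoc, ihx, mul_assoc]

theorem tm_comm (h : PRels e t) {x y : N} (hx : x ∈ TM t) (hy : y ∈ TM t) :
    x * y = y * x := by
  induction hy using Submonoid.closure_induction with
  | mem y hy => obtain ⟨p, rfl⟩ := hy; exact h.tm_comm_t hx _ _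
  | one => simp
  | mul y z _ _ ihy ihz => rw [← mul_assoc, ihy, mul_assoc, ihz, mul_assoc]

theorem tm_idem (h : PRels e t) {x : N} (hx : x ∈ TM t) : x * x = x := by
  induction hx using Submonoid.closure_induction with
  | mem x hx => obtain ⟨p, rfl⟩ := hx; exact h.t_idem _ _
  | one => simp
  | mul x y hx hy ihx ihy =>
    rw [mul_assoc, ← mul_assoc y, h.tm_comm hy hx, mul_assoc x y y, ihy, ← mul_assoc, ihx]

/-- Moving `e i` to the left of a product of `t`s leaves behind at most one `t` touching `i`. -/
theorem tm_mul_e (h : PRels e t) {y : N} (hy : y ∈ TM t) (i : Fin n) :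
    (∃ z ∈ TM t, y * e i = e i * z) ∨
      ∃ a, a ≠ some i ∧ ∃ z ∈ TM t, y * e i = t (some i) a * e i * z := by
  induction hy using Submonoid.closure_induction_left with
  | one => exact Or.inl ⟨1, one_mem _, by simp⟩
  | mul_left x hx y _ ih =>
    obtain ⟨⟨c, d⟩, rfl⟩ := hx
    by_cases hcd : c = d
    · subst hcd
      simpa [h.t_self] using ih
    -- The letter `t c d` either avoids `i`, or may be written `t (some i) d` with `d ≠ some i`.
    by_cases hci : c ≠ some i ∧ d ≠ some i
    · have hte := h.te_comm c d i hci.1 hci.2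
      rcases ih with ⟨z, hz, e1⟩ | ⟨a, ha, z, hz, e1⟩
      · refine Or.inl ⟨t c d * z, mul_mem (t_mem t c d) hz, ?_⟩
        rw [mul_assoc, e1, ← mul_assoc, hte, mul_assoc]
      · refine Or.inr ⟨a, ha, t c d * z, mul_mem (t_mem t c d) hz, ?_⟩
        rw [mul_assoc, e1, ← mul_assoc, ← mul_assoc, h.t_comm, mul_assoc _ _ (e i), hte]
        simp only [mul_assoc]
    · have : ∃ d', d' ≠ some i ∧ t c d = t (some i) d' := by
        by_cases hc : c = some i
        · exact ⟨d, fun hd => hcd (hc.trans hd.symm), by rw [hc]⟩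
        · have hd : d = some i := by
            by_contra hd
            exact hci ⟨hc, hd⟩
          exact ⟨c, hc, by rw [hd, h.t_symm]⟩
      obtain ⟨d', hd', e2⟩ := this
      simp only [e2]
      rcases ih with ⟨z, hz, e1⟩ | ⟨a, ha, z, hz, e1⟩
      · exact Or.inr ⟨d', hd', z, hz, by rw [mul_assoc, e1, mul_assoc]⟩
      · refine Or.inr ⟨a, ha, t d' a * z, mul_mem (t_mem t d' a) hz, ?_⟩
        calc t (some i) d' * y * e i
            = t a (some i) * t (some i) d' * e i * z := by
              rw [mul_assoc, e1, h.t_symm a, h.t_comm (some i) a]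
              simp only [mul_assoc]
          _ = t a (some i) * (t d' a * e i) * z := by
              rw [← h.t_tri d' a, h.t_comm]
              simp only [mul_assoc]
          _ = t (some i) a * e i * (t d' a * z) := by
              rw [h.te_comm _ _ i hd' ha, h.t_symm a]
              simp only [mul_assoc]

/-- `m` factors as a product of `t`s, a partial permutation, and a product of `t`s. -/
def Exp (e : Fin n → N) (t : Option (Fin n) → Option (Fin n) → N) (m : N) : Prop :=
  ∃ x ∈ TM t, ∃ s σ, J (G e t) s σ ∧ ∃ y ∈ TM t, m = x * s * y

theorem exp_e (h : PRels e t) (i : Fin n) : Exp e t (e i) :=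
  ⟨1, one_mem _, _, _, J.gen i i, 1, one_mem _, by rw [h.G_self]; simp⟩

theorem exp_t (h : PRels e t) (i : Fin n) (a : Option (Fin n)) (ha : a ≠ some i) :
    Exp e t (t (some i) a) :=
  ⟨_, t_mem t _ _, _, _, J.gen i i, _, t_mem t (some i) a, by rw [h.G_self, h.tet i a ha]⟩

theorem exp_mul_t {m : N} (hm : Exp e t m) (a b : Option (Fin n)) : Exp e t (m * t a b) := by
  obtain ⟨x, hx, s, σ, hs, y, hy, rfl⟩ := hm
  exact ⟨x, hx, s, σ, hs, y * t a b, mul_mem hy (t_mem t a b), by rw [mul_assoc]⟩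

theorem exp_mul_e (h : PRels e t) {m : N} (hm : Exp e t m) (i : Fin n) :
    Exp e t (m * e i) := by
  obtain ⟨x, hx, s, σ, hs, y, hy, rfl⟩ := hm
  have hei : J (G e t) (s * e i) (σ * v i i) := h.G_self i ▸ hs.mul (J.gen i i)
  rcases h.tm_mul_e hy i with ⟨z, hz, e1⟩ | ⟨a, ha, z, hz, e1⟩
  · exact ⟨x, hx, _, _, hei, z, hz, by rw [mul_assoc, e1]; simp only [mul_assoc]⟩
  rcases hi : σ.pre i with _ | i0
  · have h1 : s * e i = s := by rw [← h.G_self i]; exact hs.absorb_right h.gsys hi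
    refine ⟨x, hx, _, _, hs, z, hz, ?_⟩
    calc x * s * y * e i = x * (s * e i) * (t (some i) a * e i * z) := by
          rw [mul_assoc, e1, h1]
      _ = x * s * (e i * t (some i) a * e i) * z := by simp only [mul_assoc]
      _ = x * s * z := by rw [h.ete i a ha, mul_assoc x s, h1]
  have hi0 := (σ.pre_eq _ _).1 hi
  by_cases hlk : ∃ a0, lk σ a0 a
  · obtain ⟨a0, ha0⟩ := hlk
    have := h.t_move hs (Or.inr ⟨i0, i, rfl, rfl, hi0⟩) ha0
    refine ⟨x * t (some i0) a0, mul_mem hx (t_mem t _ _), _, _, hei, z, hz, ?_⟩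
    calc x * s * y * e i = x * (s * t (some i) a) * e i * z := by
          rw [mul_assoc, e1]; simp only [mul_assoc]
      _ = _ := by rw [← this]; simp only [mul_assoc]
  · rcases a with _ | j
    · exact absurd ⟨none, Or.inl ⟨rfl, rfl⟩⟩ hlk
    have hj : σ.pre j = none := by
      rw [pre_eq_none]
      intro j0 hj0
      exact hlk ⟨some j0, Or.inr ⟨j0, j, rfl, rfl, hj0⟩⟩
    have h1 : s * e j = s := by rw [← h.G_self j]; exact hs.absorb_right h.gsys hj
    refine ⟨x, hx, _, _, hs.mul (J.gen j i), z, hz, ?_⟩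
    calc x * s * y * e i = x * (s * e j) * (t (some i) (some j) * e i * z) := by
          rw [mul_assoc, e1, h1]
      _ = _ := by rw [h.t_symm, G]; simp only [mul_assoc]

end PRels

/-! ### Normal forms -/

namespace PRels

open PE

variable {n : ℕ} {N : Type*} [Monoid N] {e : Fin n → N}
  {t : Option (Fin n) → Option (Fin n) → N}

theorem t_merge (h : PRels e t) (a b c : Option (Fin n)) :
    t a c * (t a b * t b c) = t a b * t b c := by
  rw [h.t_tri, h.t_comm b c, ← mul_assoc, h.t_symm c a, h.t_idem]

/-- The equivalence relation of all `(a, b)` for which `t a b` is a left unit of `m`. -/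
def lset (h : PRels e t) (m : N) : Setoid (Option (Fin n)) where
  r a b := t a b * m = m
  iseqv :=
    { refl := fun a => by rw [h.t_self, one_mul]
      symm := fun {a b} hab => by rw [h.t_symm, hab]
      trans := fun {a b c} hab hbc => by
        have : m = t a b * t b c * m := by rw [mul_assoc, hbc, hab]
        rw [this, ← mul_assoc, h.t_merge] }

/-- The equivalence relation of all `(a, b)` for which `t a b` is a right unit of `m`. -/
def rset (h : PRels e t) (m : N) : Setoid (Option (Fin n)) where
  r a b := m * t a b = m
  iseqv :=
    { refl := fun a => by rw [h.t_self, mul_one]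
      symm := fun {a b} hab => by rw [h.t_symm, hab]
      trans := fun {a b c} hab hbc => by
        have : m = m * (t a b * t b c) := by rw [← mul_assoc, hab, hbc]
        have hc : t a b * t b c * t a c = t a b * t b c := by
          rw [h.tm_comm_t (mul_mem (t_mem t a b) (t_mem t b c)), h.t_merge]
        rw [this, mul_assoc, hc] }

open Classical in
/-- The product of all `t a b` with `a` and `b` related, in an arbitrary order. -/
noncomputable def W (t : Option (Fin n) → Option (Fin n) → N)
    (P : Setoid (Option (Fin n))) : N :=
  (((Finset.univ.filter fun p : Option (Fin n) × Option (Fin n) => P p.1 p.2).toList).map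
    fun p => t p.1 p.2).prod

theorem W_mem (t : Option (Fin n) → Option (Fin n) → N) (P : Setoid (Option (Fin n))) :
    W t P ∈ TM t := by
  refine Submonoid.list_prod_mem _ fun x hx => ?_
  obtain ⟨p, _, rfl⟩ := List.mem_map.mp hx
  exact t_mem t _ _

/-- Induction principle for the product `W`. -/
theorem W_induction {P : Setoid (Option (Fin n))} (p : N → Prop) (h1 : p 1)
    (hm : ∀ a b x, P a b → p x → p (t a b * x)) : p (W t P) := by
  classical
  have : ∀ l : List (Option (Fin n) × Option (Fin n)), (∀ q ∈ l, P q.1 q.2) →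
      p (l.map fun q => t q.1 q.2).prod := by
    intro l
    induction l with
    | nil => intro _; simpa using h1
    | cons q l ih =>
      intro hl
      rw [List.map_cons, List.prod_cons]
      exact hm _ _ _ (hl q (by simp)) (ih fun q' hq' => hl q' (by simp [hq']))
  exact this _ fun q hq => by simpa using hq

theorem W_mul {P : Setoid (Option (Fin n))} {z : N} (hz : ∀ a b, P a b → t a b * z = z) :
    W t P * z = z :=
  W_induction (t := t) (fun x => x * z = z) (one_mul z) fun a b x hab hx => by
    rw [mul_assoc, hx, hz a b hab]

theorem mul_W {P : Setoid (Option (Fin n))} {z : N} (hz : ∀ a b, P a b → z * t a b = z) :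
    z * W t P = z :=
  W_induction (t := t) (fun x => z * x = z) (mul_one z) fun a b x hab hx => by
    rw [← mul_assoc, hz a b hab, hx]

theorem t_mul_W (h : PRels e t) {P : Setoid (Option (Fin n))} {a b : Option (Fin n)}
    (hab : P a b) : t a b * W t P = W t P := by
  classical
  have : ∀ l : List (Option (Fin n) × Option (Fin n)), (a, b) ∈ l →
      t a b * (l.map fun q => t q.1 q.2).prod = (l.map fun q => t q.1 q.2).prod := by
    intro l
    induction l with
    | nil => intro hl; simp at hl
    | cons q l ih =>
      intro hl
      rw [List.map_cons, List.prod_cons]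
      rcases List.mem_cons.mp hl with rfl | hl
      · rw [← mul_assoc, h.t_idem]
      · rw [← mul_assoc, h.t_comm, mul_assoc, ih hl]
  exact this _ (by simpa using hab)

theorem W_mul_t (h : PRels e t) {P : Setoid (Option (Fin n))} {a b : Option (Fin n)}
    (hab : P a b) : W t P * t a b = W t P := by
  rw [h.tm_comm_t (W_mem t P), h.t_mul_W hab]

theorem W_lset_mul (h : PRels e t) {m x : N} (hx : x ∈ TM t) (hxm : x * m = m) :
    W t (h.lset m) * x = W t (h.lset m) := by
  induction hx using Submonoid.closure_induction with
  | mem x hx => obtain ⟨p, rfl⟩ := hx; exact h.W_mul_t hxm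
  | one => rw [mul_one]
  | mul x y hx hy ihx ihy =>
    have h1 : x * m = m := by
      rw [← hxm, ← mul_assoc, ← mul_assoc, h.tm_idem hx]
    have h2 : y * m = m := by
      rw [← hxm, h.tm_comm hx hy, ← mul_assoc, ← mul_assoc, h.tm_idem hy]
    rw [← mul_assoc, ihx h1, ihy h2]

theorem mul_W_rset (h : PRels e t) {m y : N} (hy : y ∈ TM t) (hym : m * y = m) :
    y * W t (h.rset m) = W t (h.rset m) := by
  induction hy using Submonoid.closure_induction with
  | mem x hx => obtain ⟨p, rfl⟩ := hx; exact h.t_mul_W hym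
  | one => rw [one_mul]
  | mul x y hx hy ihx ihy =>
    have h1 : m * x = m := by
      rw [← hym, h.tm_comm hx hy, mul_assoc, mul_assoc, h.tm_idem hx]
    have h2 : m * y = m := by
      rw [← hym, mul_assoc, mul_assoc, h.tm_idem hy]
    rw [mul_assoc, ihy h2, ihx h1]

/-- `m` is the product of all its left units `t a b`, the element `s` of partial permutation
`σ`, and all its right units `t a b`. -/
def Form (h : PRels e t) (m s : N) (σ : PE n) : Prop :=
  J (G e t) s σ ∧ m = W t (h.lset m) * s * W t (h.rset m)

theorem exists_form (h : PRels e t) {m : N} (hm : Exp e t m) : ∃ s σ, h.Form m s σ := by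
  obtain ⟨x, hx, s, σ, hs, y, hy, e1⟩ := hm
  refine ⟨s, σ, hs, ?_⟩
  have hxm : x * m = m := by rw [e1, ← mul_assoc, ← mul_assoc, h.tm_idem hx]
  have hym : m * y = m := by rw [e1, mul_assoc, h.tm_idem hy]
  calc m = W t (h.lset m) * m * W t (h.rset m) := by
        rw [W_mul fun a b hab => hab, mul_W fun a b hab => hab]
    _ = W t (h.lset m) * (x * s * y) * W t (h.rset m) := by rw [← e1]
    _ = (W t (h.lset m) * x) * s * (y * W t (h.rset m)) := by simp only [mul_assoc]
    _ = _ := by rw [h.W_lset_mul hx hxm, h.mul_W_rset hy hym]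

/-- Equivalences on the upper and on the lower points correspond along the strings of `σ`. -/
theorem Form.sat {h : PRels e t} {m s : N} {σ : PE n} (hf : h.Form m s σ)
    {a a' b b' : Option (Fin n)} (ha : lk σ a a') (hb : lk σ b b') :
    h.lset m a b ↔ h.rset m a' b' := by
  have : t a b * m = m * t a' b' := by
    conv_lhs => rw [hf.2]
    conv_rhs => rw [hf.2]
    rw [← mul_assoc, ← mul_assoc, ← h.tm_comm_t (W_mem t _), mul_assoc _ _ s,
      h.t_move hf.1 ha hb, mul_assoc _ _ (t a' b'), h.tm_comm_t (W_mem t _)]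
    simp only [mul_assoc]
  change t a b * m = m ↔ m * t a' b' = m
  rw [this]

open Classical in
/-- A choice of representatives of the classes of `P`, with `none` representing its class. -/
noncomputable def rep (P : Setoid (Option (Fin n))) (a : Option (Fin n)) : Option (Fin n) :=
  if P a none then none else (Quotient.mk P a).out

theorem rep_rel (P : Setoid (Option (Fin n))) (a : Option (Fin n)) : P (rep P a) a := by
  unfold rep
  split_ifs with ha
  · exact P.symm ha
  · exact Quotient.mk_out (s := P) a

theorem rep_congr (P : Setoid (Option (Fin n))) {a b : Option (Fin n)} (hab : P a b) :
    rep P a = rep P b := by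
  unfold rep
  by_cases ha : P a none
  · rw [if_pos ha, if_pos (P.trans (P.symm hab) ha)]
  · rw [if_neg ha, if_neg fun hb => ha (P.trans hab hb), Quotient.sound (s := P) hab]

theorem rep_none (P : Setoid (Option (Fin n))) : rep P none = none :=
  if_pos (P.refl none)

theorem rep_rep (P : Setoid (Option (Fin n))) (a : Option (Fin n)) :
    rep P (rep P a) = rep P a := rep_congr P (rep_rel P a)

/-- The domain and the codomain of `σ` consist of representatives. -/
def Reduced (P Q : Setoid (Option (Fin n))) (σ : PE n) : Prop :=
  ∀ i j, σ.ap i = some j → rep P (some i) = some i ∧ rep Q (some j) = some j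

open Classical in
/-- The points of the domain which are not representatives. -/
noncomputable def domBad (P : Setoid (Option (Fin n))) (σ : PE n) : Finset (Fin n) :=
  Finset.univ.filter fun i => σ.ap i ≠ none ∧ rep P (some i) ≠ some i

open Classical in
/-- The points of the codomain which are not representatives. -/
noncomputable def codBad (Q : Setoid (Option (Fin n))) (σ : PE n) : Finset (Fin n) :=
  Finset.univ.filter fun j => σ.pre j ≠ none ∧ rep Q (some j) ≠ some j

theorem mem_domBad {P : Setoid (Option (Fin n))} {σ : PE n} {i : Fin n} :
    i ∈ domBad P σ ↔ σ.ap i ≠ none ∧ rep P (some i) ≠ some i := by simp [domBad]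

theorem mem_codBad {Q : Setoid (Option (Fin n))} {σ : PE n} {j : Fin n} :
    j ∈ codBad Q σ ↔ σ.pre j ≠ none ∧ rep Q (some j) ≠ some j := by simp [codBad]

theorem pre_mul (σ τ : PE n) (b : Fin n) : (σ * τ).pre b = (τ.pre b).bind σ.pre := rfl

theorem v_pre (i j b : Fin n) :
    (v i j).pre b = if b = j then none else some (Equiv.swap i j b) := rfl

/-- A point of the domain that is not a representative may be deleted, or replaced by its
representative. -/
theorem Form.step_dom {h : PRels e t} {m s : N} {σ : PE n} (hf : h.Form m s σ) {i : Fin n}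
    (hi : i ∈ domBad (h.lset m) σ) :
    ∃ s' σ', h.Form m s' σ' ∧ (domBad (h.lset m) σ').card < (domBad (h.lset m) σ).card ∧
      codBad (h.rset m) σ' ⊆ codBad (h.rset m) σ := by
  obtain ⟨hi1, hi2⟩ := mem_domBad.1 hi
  obtain ⟨i', hi'⟩ := Option.ne_none_iff_exists'.mp hi1
  set P := h.lset m with hP
  obtain ⟨a, ha⟩ : ∃ a, a = rep P (some i) := ⟨_, rfl⟩
  rw [← ha] at hi2
  have hrel : P (some i) a := ha ▸ P.symm (rep_rel P (some i))
  have hWt : W t P * t (some i) a = W t P := h.W_mul_t hrel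
  have hcod : ∀ x, codBad (h.rset m) (v i x * σ) ⊆ codBad (h.rset m) σ := by
    intro x j hj
    rw [mem_codBad] at hj ⊢
    refine ⟨fun h0 => hj.1 ?_, hj.2⟩
    rw [pre_mul, h0]
    rfl
  by_cases hlk : ∃ a', lk σ a a'
  · obtain ⟨a', ha'⟩ := hlk
    have hli : lk σ (some i) (some i') := Or.inr ⟨i, i', rfl, rfl, hi'⟩
    have hmove := h.t_move hf.1 hli ha'
    have hW't := h.t_mul_W ((hf.sat hli ha').1 hrel)
    refine ⟨_, _, ⟨(J.gen i i).mul hf.1, ?_⟩, Finset.card_lt_card ?_, hcod i⟩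
    · rw [h.G_self]
      calc m = W t P * s * W t (h.rset m) := hf.2
        _ = W t P * (t (some i) a * e i * t (some i) a) * s * W t (h.rset m) := by
          rw [h.tet i a hi2, hWt]
        _ = (W t P * t (some i) a) * e i * (t (some i) a * s) * W t (h.rset m) := by
          simp only [mul_assoc]
        _ = W t P * e i * s * (t (some i') a' * W t (h.rset m)) := by
          rw [hWt, hmove]; simp only [mul_assoc]
        _ = W t P * (e i * s) * W t (h.rset m) := by rw [hW't]; simp only [mul_assoc]
    · rw [Finset.ssubset_iff_of_subset]
      · refine ⟨i, hi, fun hc => (mem_domBad.1 hc).1 ?_⟩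
        rw [mul_ap, v_ap_self]; rfl
      · intro x hx
        obtain ⟨hx1, hx2⟩ := mem_domBad.1 hx
        by_cases hxi : x = i
        · exact hxi ▸ hi
        · rw [mul_ap, v_diag_of_ne hxi] at hx1
          exact mem_domBad.2 ⟨hx1, hx2⟩
  · rcases a with _ | c
    · exact absurd ⟨none, Or.inl ⟨rfl, rfl⟩⟩ hlk
    have hc : σ.ap c = none := by
      rw [Option.eq_none_iff_forall_ne_some]
      intro c' hc'
      exact hlk ⟨some c', Or.inr ⟨c, c', rfl, rfl, hc'⟩⟩
    have hec : e c * s = s := by rw [← h.G_self c]; exact hf.1.absorb_left h.gsys hc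
    have hci : c ≠ i := fun e => hi2 (by rw [e])
    refine ⟨_, _, ⟨(J.gen i c).mul hf.1, ?_⟩, Finset.card_lt_card ?_, hcod c⟩
    · calc m = W t P * s * W t (h.rset m) := hf.2
        _ = W t P * (t (some i) (some c) * e i * t (some i) (some c)) * s *
              W t (h.rset m) := by
          rw [h.tet i _ hi2, hWt]
        _ = (W t P * t (some i) (some c)) * e i * t (some i) (some c) * s *
              W t (h.rset m) := by
          simp only [mul_assoc]
        _ = W t P * e i * t (some i) (some c) * (e c * s) * W t (h.rset m) := by
          rw [hWt, hec]
        _ = W t P * (G e t i c * s) * W t (h.rset m) := by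
          rw [G]; simp only [mul_assoc]
    · rw [Finset.ssubset_iff_of_subset]
      · refine ⟨i, hi, fun hc => (mem_domBad.1 hc).1 ?_⟩
        rw [mul_ap, v_ap_self]; rfl
      · intro x hx
        obtain ⟨hx1, hx2⟩ := mem_domBad.1 hx
        by_cases hxi : x = i
        · exact hxi ▸ hi
        by_cases hxc : x = c
        · exact absurd (by rw [hxc, ha, rep_rep]) hx2
        · rw [mul_ap, v_ap_of_ne hxi hxc] at hx1
          exact mem_domBad.2 ⟨hx1, hx2⟩

/-- The dual of `Form.step_dom`, for the codomain. -/
theorem Form.step_cod {h : PRels e t} {m s : N} {σ : PE n} (hf : h.Form m s σ) {j : Fin n}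
    (hj : j ∈ codBad (h.rset m) σ) :
    ∃ s' σ', h.Form m s' σ' ∧ domBad (h.lset m) σ' ⊆ domBad (h.lset m) σ ∧
      (codBad (h.rset m) σ').card < (codBad (h.rset m) σ).card := by
  obtain ⟨hj1, hj2⟩ := mem_codBad.1 hj
  obtain ⟨j', hj'⟩ := Option.ne_none_iff_exists'.mp hj1
  set Q := h.rset m with hQ
  obtain ⟨a, ha⟩ : ∃ a, a = rep Q (some j) := ⟨_, rfl⟩
  rw [← ha] at hj2
  have hrel : Q (some j) a := ha ▸ Q.symm (rep_rel Q (some j))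
  have htW : t (some j) a * W t Q = W t Q := h.t_mul_W hrel
  have hdom : ∀ x, domBad (h.lset m) (σ * v x j) ⊆ domBad (h.lset m) σ := by
    intro x i hi
    rw [mem_domBad] at hi ⊢
    refine ⟨fun h0 => hi.1 ?_, hi.2⟩
    rw [mul_ap, h0]
    rfl
  by_cases hlk : ∃ a', lk σ a' a
  · obtain ⟨a', ha'⟩ := hlk
    have hlj : lk σ (some j') (some j) := Or.inr ⟨j', j, rfl, rfl, (σ.pre_eq _ _).1 hj'⟩
    have hmove := h.t_move hf.1 hlj ha'
    have hWt' := h.W_mul_t ((hf.sat hlj ha').2 hrel)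
    refine ⟨_, _, ⟨hf.1.mul (J.gen j j), ?_⟩, hdom j, Finset.card_lt_card ?_⟩
    · rw [h.G_self]
      calc m = W t (h.lset m) * s * W t Q := hf.2
        _ = W t (h.lset m) * s * (t (some j) a * e j * t (some j) a * W t Q) := by
          rw [h.tet j a hj2, htW]
        _ = W t (h.lset m) * (s * t (some j) a) * e j * (t (some j) a * W t Q) := by
          simp only [mul_assoc]
        _ = (W t (h.lset m) * t (some j') a') * s * e j * W t Q := by
          rw [htW, ← hmove]; simp only [mul_assoc]
        _ = W t (h.lset m) * (s * e j) * W t Q := by rw [hWt']; simp only [mul_assoc]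
    · rw [Finset.ssubset_iff_of_subset]
      · refine ⟨j, hj, fun hc => (mem_codBad.1 hc).1 ?_⟩
        rw [pre_mul, v_pre, if_pos rfl]; rfl
      · intro x hx
        obtain ⟨hx1, hx2⟩ := mem_codBad.1 hx
        by_cases hxj : x = j
        · exact hxj ▸ hj
        · rw [pre_mul, v_pre, if_neg hxj, Equiv.swap_self] at hx1
          exact mem_codBad.2 ⟨hx1, hx2⟩
  · rcases a with _ | c
    · exact absurd ⟨none, Or.inl ⟨rfl, rfl⟩⟩ hlk
    have hc : σ.pre c = none := by
      rw [pre_eq_none]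
      intro c' hc'
      exact hlk ⟨some c', Or.inr ⟨c', c, rfl, rfl, hc'⟩⟩
    have hec : s * e c = s := by rw [← h.G_self c]; exact hf.1.absorb_right h.gsys hc
    refine ⟨_, _, ⟨hf.1.mul (J.gen c j), ?_⟩, hdom c, Finset.card_lt_card ?_⟩
    · calc m = W t (h.lset m) * s * W t Q := hf.2
        _ = W t (h.lset m) * s * (t (some j) (some c) * e j * t (some j) (some c) *
              W t Q) := by
          rw [h.tet j _ hj2, htW]
        _ = W t (h.lset m) * s * t (some j) (some c) * e j *
              (t (some j) (some c) * W t Q) := by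
          simp only [mul_assoc]
        _ = W t (h.lset m) * (s * e c) * t (some c) (some j) * e j * W t Q := by
          rw [htW, hec, h.t_symm (some j)]
        _ = W t (h.lset m) * (s * G e t c j) * W t Q := by
          rw [G]; simp only [mul_assoc]
    · rw [Finset.ssubset_iff_of_subset]
      · refine ⟨j, hj, fun hc => (mem_codBad.1 hc).1 ?_⟩
        rw [pre_mul, v_pre, if_pos rfl]; rfl
      · intro x hx
        obtain ⟨hx1, hx2⟩ := mem_codBad.1 hx
        by_cases hxj : x = j
        · exact hxj ▸ hj
        by_cases hxc : x = c
        · exact absurd (by rw [hxc, ha, rep_rep]) hx2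
        · rw [pre_mul, v_pre, if_neg hxj, Equiv.swap_apply_of_ne_of_ne hxc hxj] at hx1
          exact mem_codBad.2 ⟨hx1, hx2⟩

theorem Form.reduce {h : PRels e t} {m : N} : ∀ (k : ℕ) {s : N} {σ : PE n},
    h.Form m s σ → (domBad (h.lset m) σ).card + (codBad (h.rset m) σ).card ≤ k →
    ∃ s' σ', h.Form m s' σ' ∧ Reduced (h.lset m) (h.rset m) σ' := by
  intro k
  induction k with
  | zero =>
    intro s σ hf hk
    refine ⟨s, σ, hf, fun i j hij => ?_⟩
    have h1 : domBad (h.lset m) σ = ∅ := by rw [← Finset.card_eq_zero]; omega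
    have h2 : codBad (h.rset m) σ = ∅ := by rw [← Finset.card_eq_zero]; omega
    constructor
    · by_contra hc
      have : i ∈ domBad (h.lset m) σ := mem_domBad.2 ⟨by simp [hij], hc⟩
      simp [h1] at this
    · by_contra hc
      have : j ∈ codBad (h.rset m) σ :=
        mem_codBad.2 ⟨by simp [(σ.pre_eq i j).2 hij], hc⟩
      simp [h2] at this
  | succ k ih =>
    intro s σ hf hk
    rcases (domBad (h.lset m) σ).eq_empty_or_nonempty with h1 | ⟨i, hi⟩
    · rcases (codBad (h.rset m) σ).eq_empty_or_nonempty with h2 | ⟨j, hj⟩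
      · exact ih hf (by simp [h1, h2])
      · obtain ⟨s', σ', hf', hd, hc⟩ := hf.step_cod hj
        have := Finset.card_le_card hd
        exact ih hf' (by omega)
    · obtain ⟨s', σ', hf', hd, hc⟩ := hf.step_dom hi
      have := Finset.card_le_card hc
      exact ih hf' (by omega)

theorem exists_reduced (h : PRels e t) {m : N} (hm : Exp e t m) :
    ∃ s σ, h.Form m s σ ∧ Reduced (h.lset m) (h.rset m) σ := by
  obtain ⟨s, σ, hf⟩ := h.exists_form hm
  exact Form.reduce _ hf le_rfl

end PRels

/-! ### The model by relations on colourings -/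

/-- Binary relations on the set of two-colourings of `Fin n`, under composition. -/
def BR (n : ℕ) := (Fin n → Prop) → (Fin n → Prop) → Prop

namespace BR

open PE PRels

variable {n : ℕ}

instance : Monoid (BR n) where
  mul r s := fun f g => ∃ h, r f h ∧ s h g
  one := fun f g => f = g
  mul_assoc r s u := by
    funext f g
    apply propext
    constructor
    · rintro ⟨h, ⟨k, h1, h2⟩, h3⟩
      exact ⟨k, h1, h, h2, h3⟩
    · rintro ⟨k, h1, h, h2, h3⟩
      exact ⟨h, ⟨k, h1, h2⟩, h3⟩
  one_mul r := by
    funext f g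
    apply propext
    constructor
    · rintro ⟨h, rfl, h1⟩
      exact h1
    · exact fun h1 => ⟨f, rfl, h1⟩
  mul_one r := by
    funext f g
    apply propext
    constructor
    · rintro ⟨h, h1, rfl⟩
      exact h1
    · exact fun h1 => ⟨g, h1, rfl⟩

theorem mul_iff (r s : BR n) (f g : Fin n → Prop) : (r * s) f g ↔ ∃ h, r f h ∧ s h g := Iff.rfl

theorem one_iff (f g : Fin n → Prop) : (1 : BR n) f g ↔ f = g := Iff.rfl

theorem ext' {r s : BR n} (h : ∀ f g, r f g ↔ s f g) : r = s :=
  funext fun f => funext fun g => propext (h f g)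

/-- The extension of a colouring by `False` at the dot point. -/
def ex (f : Fin n → Prop) (a : Option (Fin n)) : Prop := a.elim False f

@[simp] theorem ex_none (f : Fin n → Prop) : ex f none = False := rfl

@[simp] theorem ex_some (f : Fin n → Prop) (i : Fin n) : ex f (some i) = f i := rfl

/-- The relation of a deleted point: the colour of `i` is free. -/
def De (i : Fin n) : BR n := fun f g => ∀ j, j ≠ i → (f j ↔ g j)

/-- The relation forcing `a` and `b` to have the same colour. -/
def Dt (a b : Option (Fin n)) : BR n := fun f g => f = g ∧ (ex f a ↔ ex f b)

/-- The relation of a partial permutation: colours agree along its strings. -/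
def R (σ : PE n) : BR n := fun f g => ∀ a b, σ.ap a = some b → (f a ↔ g b)

theorem Dt_mul (a b : Option (Fin n)) (r : BR n) (f g : Fin n → Prop) :
    (Dt a b * r) f g ↔ (ex f a ↔ ex f b) ∧ r f g := by
  constructor
  · rintro ⟨h, ⟨rfl, h1⟩, h2⟩
    exact ⟨h1, h2⟩
  · rintro ⟨h1, h2⟩
    exact ⟨f, ⟨rfl, h1⟩, h2⟩

theorem mul_Dt (a b : Option (Fin n)) (r : BR n) (f g : Fin n → Prop) :
    (r * Dt a b) f g ↔ r f g ∧ (ex g a ↔ ex g b) := by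
  constructor
  · rintro ⟨h, h1, rfl, h2⟩
    exact ⟨h1, h2⟩
  · rintro ⟨h1, h2⟩
    exact ⟨g, h1, rfl, h2⟩

theorem R_mul (σ τ : PE n) : R σ * R τ = R (σ * τ) := by
  apply ext'
  intro f g
  constructor
  · rintro ⟨h, h1, h2⟩ a c hac
    obtain ⟨b, hab, hbc⟩ := Option.bind_eq_some_iff.mp hac
    exact (h1 a b hab).trans (h2 b c hbc)
  · intro hfg
    refine ⟨fun b => (∃ a, σ.ap a = some b ∧ f a) ∨ ∃ c, τ.ap b = some c ∧ g c, ?_, ?_⟩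
    · intro a b hab
      refine ⟨fun ha => Or.inl ⟨a, hab, ha⟩, ?_⟩
      rintro (⟨a', hab', ha'⟩ | ⟨c, hbc, hc⟩)
      · rwa [σ.inj hab hab']
      · exact (hfg a c (by rw [mul_ap, hab]; exact hbc)).2 hc
    · intro b c hbc
      refine ⟨?_, fun hc => Or.inr ⟨c, hbc, hc⟩⟩
      rintro (⟨a, hab, ha⟩ | ⟨c', hbc', hc'⟩)
      · exact (hfg a c (by rw [mul_ap, hab]; exact hbc)).1 ha
      · rw [hbc] at hbc'
        rwa [Option.some.inj hbc']

theorem De_eq (i : Fin n) : De i = R (v i i) := by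
  apply ext'
  intro f g
  constructor
  · intro h a b hab
    have ha : a ≠ i := by rintro rfl; simp [v_ap_self] at hab
    rw [v_diag_of_ne ha] at hab
    rw [← Option.some.inj hab]
    exact h a ha
  · intro h a ha
    exact h a a (v_diag_of_ne ha)

theorem G_eq (i j : Fin n) : G De Dt i j = R (v i j) := by
  by_cases hij : i = j
  · subst hij
    have : Dt (some i) (some i) = (1 : BR n) := by
      apply ext'
      intro f g
      simp [Dt, one_iff]
    rw [G, this, mul_one, De_eq, R_mul, gsys_v.left]
  apply ext'
  intro f g
  rw [G, mul_iff]
  constructor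
  · rintro ⟨h, h1, h2⟩ a b hab
    rw [mul_Dt, ex_some, ex_some] at h1
    have ha : a ≠ i := by rintro rfl; simp [v_ap_self] at hab
    by_cases haj : a = j
    · subst haj
      rw [v_ap_right hij] at hab
      rw [← Option.some.inj hab]
      exact ((h1.1 a ha).trans h1.2.symm).trans (h2 i hij)
    · rw [v_ap_of_ne ha haj] at hab
      rw [← Option.some.inj hab]
      exact (h1.1 a ha).trans (h2 a haj)
  · intro hR
    refine ⟨fun x => if x = j then f j else g x, ?_, ?_⟩
    · rw [mul_Dt, ex_some, ex_some]
      refine ⟨fun x hx => ?_, ?_⟩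
      · by_cases hxj : x = j
        · simp [hxj]
        · simpa [hxj] using hR x x (v_ap_of_ne hx hxj)
      · simpa [hij] using (hR j i (v_ap_right hij)).symm
    · intro x hx
      simp [hx]

theorem ex_iff_of_De {k : Fin n} {f g : Fin n → Prop} (h : De k f g) {a : Option (Fin n)}
    (ha : a ≠ some k) : ex f a ↔ ex g a := by
  rcases a with _ | i
  · rfl
  · exact h i (by simpa using ha)

/-- The relations on colourings satisfy the defining relations. -/
theorem prels : PRels (De : Fin n → BR n) Dt where
  t_self a := by
    apply ext'
    intro f g
    simp [Dt, one_iff]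
  t_symm a b := by
    apply ext'
    intro f g
    simp only [Dt]
    tauto
  t_idem a b := by
    apply ext'
    intro f g
    rw [Dt_mul]
    simp only [Dt]
    tauto
  t_comm a b c d := by
    apply ext'
    intro f g
    rw [Dt_mul, Dt_mul]
    simp only [Dt]
    tauto
  t_tri a b c := by
    apply ext'
    intro f g
    rw [Dt_mul, Dt_mul]
    simp only [Dt]
    tauto
  e_idem i := by rw [De_eq, R_mul, gsys_v.left]
  e_comm i j := by rw [De_eq, De_eq, R_mul, R_mul, gsys_v.comm]
  te_comm a b k ha hb := by
    apply ext'
    intro f g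
    rw [Dt_mul, mul_Dt, and_comm]
    refine and_congr_right fun h => ?_
    rw [ex_iff_of_De h ha, ex_iff_of_De h hb]
  tet k a ha := by
    apply ext'
    intro f g
    rw [mul_Dt, Dt_mul]
    constructor
    · rintro ⟨⟨h1, h2⟩, h3⟩
      refine ⟨funext fun j => propext ?_, h1⟩
      by_cases hj : j = k
      · subst hj
        exact (h1.trans (ex_iff_of_De h2 ha)).trans h3.symm
      · exact h2 j hj
    · rintro ⟨rfl, h1⟩
      exact ⟨⟨h1, fun j _ => Iff.rfl⟩, h1⟩
  ete k a ha := by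
    apply ext'
    intro f g
    rw [mul_iff]
    constructor
    · rintro ⟨h, h1, h2⟩ j hj
      rw [mul_Dt] at h1
      exact (h1.1 j hj).trans (h2 j hj)
    · intro hfg
      have hup : De k f (Function.update f k (ex f a)) := fun j hj => by simp [hj]
      refine ⟨Function.update f k (ex f a), ?_, fun j hj => ?_⟩
      · rw [mul_Dt]
        refine ⟨hup, ?_⟩
        rw [← ex_iff_of_De hup ha, ex_some, Function.update_self]
      · rw [← hfg j hj, ← hup j hj]
  r9 i j k h1 h2 h3 := by simp only [G_eq, R_mul, gsys_v.r9 i j k h1 h2 h3]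
  r10 i j k l h1 h2 h3 h4 h5 h6 := by
    simp only [G_eq, R_mul, gsys_v.r10 i j k l h1 h2 h3 h4 h5 h6]

/-- A colouring constant on the classes of `P`, and `False` on the class of the dot point. -/
def Inv (P : Setoid (Option (Fin n))) (f : Fin n → Prop) : Prop :=
  ∀ a b, P a b → (ex f a ↔ ex f b)

end BR

/-! ### The normal form can be read off from the model -/

namespace PRels

open PE BR

variable {n : ℕ} {N : Type*} [Monoid N] {e : Fin n → N}
  {t : Option (Fin n) → Option (Fin n) → N} {φ : N →* BR n}

theorem map_J (hφe : ∀ i, φ (e i) = De i) (hφt : ∀ a b, φ (t a b) = Dt a b) {s : N}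
    {σ : PE n} (hs : J (G e t) s σ) : φ s = R σ := by
  induction hs with
  | gen i j => rw [← G_eq, G, G, map_mul, map_mul, hφe, hφe, hφt]
  | mul _ _ ih1 ih2 => rw [map_mul, ih1, ih2, R_mul]

theorem map_W (h : PRels e t) (hφt : ∀ a b, φ (t a b) = Dt a b)
    (P : Setoid (Option (Fin n))) (f g : Fin n → Prop) :
    φ (W t P) f g ↔ f = g ∧ Inv P f := by
  constructor
  · intro hW
    refine ⟨?_, fun a b hab => ?_⟩
    · revert f g
      refine W_induction (P := P) (t := t) (fun x => ∀ f g, φ x f g → f = g) ?_ ?_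
      · intro f g h1
        rw [map_one] at h1
        exact h1
      · intro a b x _ hx f g h1
        rw [map_mul, hφt, Dt_mul] at h1
        exact hx f g h1.2
    · rw [← h.t_mul_W hab, map_mul, hφt, Dt_mul] at hW
      exact hW.1
  · rintro ⟨rfl, hf⟩
    refine W_induction (P := P) (t := t) (fun x => φ x f f) ?_ ?_
    · rw [map_one]
      exact rfl
    · intro a b x hab hx
      rw [map_mul, hφt, Dt_mul]
      exact ⟨hf a b hab, hx⟩

theorem Form.map {h : PRels e t} (hφe : ∀ i, φ (e i) = De i)
    (hφt : ∀ a b, φ (t a b) = Dt a b) {m s : N} {σ : PE n} (hf : h.Form m s σ)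
    (f g : Fin n → Prop) :
    φ m f g ↔ Inv (h.lset m) f ∧ R σ f g ∧ Inv (h.rset m) g := by
  have : φ m = φ (W t (h.lset m)) * R σ * φ (W t (h.rset m)) := by
    conv_lhs => rw [hf.2]
    rw [map_mul, map_mul, map_J hφe hφt hf.1]
  rw [this, mul_iff]
  constructor
  · rintro ⟨k, ⟨l, h1, h2⟩, h3⟩
    obtain ⟨rfl, i1⟩ := (h.map_W hφt _ _ _).1 h1
    obtain ⟨rfl, i3⟩ := (h.map_W hφt _ _ _).1 h3
    exact ⟨i1, h2, i3⟩
  · rintro ⟨h1, h2, h3⟩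
    exact ⟨g, ⟨f, (h.map_W hφt _ _ _).2 ⟨rfl, h1⟩, h2⟩, (h.map_W hφt _ _ _).2 ⟨rfl, h3⟩⟩

/-- The canonical extension of an upper colouring to the lower points. -/
def down (Q : Setoid (Option (Fin n))) (σ : PE n) (f : Fin n → Prop) (j : Fin n) : Prop :=
  ∃ i b, σ.ap i = some b ∧ Q (some j) (some b) ∧ f i

/-- The canonical extension of a lower colouring to the upper points. -/
def up (P : Setoid (Option (Fin n))) (σ : PE n) (g : Fin n → Prop) (i : Fin n) : Prop :=
  ∃ a j, σ.ap a = some j ∧ P (some i) (some a) ∧ g j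

theorem Form.map_down {h : PRels e t} (hφe : ∀ i, φ (e i) = De i)
    (hφt : ∀ a b, φ (t a b) = Dt a b) {m s : N} {σ : PE n} (hf : h.Form m s σ)
    {f : Fin n → Prop} (hi : Inv (h.lset m) f) : φ m f (down (h.rset m) σ f) := by
  rw [hf.map hφe hφt]
  refine ⟨hi, fun a b hab => ⟨fun ha => ⟨a, b, hab, (h.rset m).refl _, ha⟩, ?_⟩, ?_⟩
  · rintro ⟨i, b', hib, hbb, hfi⟩
    have := (hf.sat (Or.inr ⟨a, b, rfl, rfl, hab⟩) (Or.inr ⟨i, b', rfl, rfl, hib⟩)).2 hbb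
    exact (hi _ _ this).2 hfi
  · have key : ∀ x, ex (down (h.rset m) σ f) x ↔
        ∃ i b, σ.ap i = some b ∧ h.rset m x (some b) ∧ f i := by
      rintro (_ | j)
      · refine ⟨fun h0 => h0.elim, ?_⟩
        rintro ⟨i, b, hib, hb, hfi⟩
        exact (hi _ _ ((hf.sat (Or.inl ⟨rfl, rfl⟩) (Or.inr ⟨i, b, rfl, rfl, hib⟩)).2 hb)).2 hfi
      · rfl
    intro x y hxy
    rw [key, key]
    constructor
    · rintro ⟨i, b, hib, hb, hfi⟩
      exact ⟨i, b, hib, (h.rset m).trans ((h.rset m).symm hxy) hb, hfi⟩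
    · rintro ⟨i, b, hib, hb, hfi⟩
      exact ⟨i, b, hib, (h.rset m).trans hxy hb, hfi⟩

theorem Form.map_up {h : PRels e t} (hφe : ∀ i, φ (e i) = De i)
    (hφt : ∀ a b, φ (t a b) = Dt a b) {m s : N} {σ : PE n} (hf : h.Form m s σ)
    {g : Fin n → Prop} (hi : Inv (h.rset m) g) : φ m (up (h.lset m) σ g) g := by
  rw [hf.map hφe hφt]
  refine ⟨?_, fun a b hab => ⟨?_, fun hb => ⟨a, b, hab, (h.lset m).refl _, hb⟩⟩, hi⟩
  · have key : ∀ x, ex (up (h.lset m) σ g) x ↔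
        ∃ a j, σ.ap a = some j ∧ h.lset m x (some a) ∧ g j := by
      rintro (_ | i)
      · refine ⟨fun h0 => h0.elim, ?_⟩
        rintro ⟨a, j, haj, ha, hgj⟩
        exact (hi _ _ ((hf.sat (Or.inl ⟨rfl, rfl⟩) (Or.inr ⟨a, j, rfl, rfl, haj⟩)).1 ha)).2 hgj
      · rfl
    intro x y hxy
    rw [key, key]
    constructor
    · rintro ⟨a, j, haj, ha, hgj⟩
      exact ⟨a, j, haj, (h.lset m).trans ((h.lset m).symm hxy) ha, hgj⟩
    · rintro ⟨a, j, haj, ha, hgj⟩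
      exact ⟨a, j, haj, (h.lset m).trans hxy ha, hgj⟩
  · rintro ⟨a', j, haj, haa, hgj⟩
    have := (hf.sat (Or.inr ⟨a, b, rfl, rfl, hab⟩) (Or.inr ⟨a', j, rfl, rfl, haj⟩)).1 haa
    exact (hi _ _ this).2 hgj

/-- The colouring that is true exactly on the class of `a`. -/
def cls (P : Setoid (Option (Fin n))) (a : Option (Fin n)) (i : Fin n) : Prop := P a (some i)

theorem ex_cls {P : Setoid (Option (Fin n))} {a : Option (Fin n)} (ha : ¬ P a none)
    (b : Option (Fin n)) : ex (cls P a) b ↔ P a b := by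
  rcases b with _ | i
  · simpa using ha
  · rfl

theorem inv_cls {P : Setoid (Option (Fin n))} {a : Option (Fin n)} (ha : ¬ P a none) :
    Inv P (cls P a) := by
  intro b c hbc
  rw [ex_cls ha, ex_cls ha]
  exact ⟨fun hb => P.trans hb hbc, fun hc => P.trans hc (P.symm hbc)⟩

/-- Two points of the dotted set that are equally coloured by all invariant colourings are
related. -/
theorem rel_of_inv {P : Setoid (Option (Fin n))} {a b : Option (Fin n)}
    (hab : ∀ f, Inv P f → (ex f a ↔ ex f b)) : P a b := by
  by_cases ha : P a none
  · by_cases hb : P b none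
    · exact P.trans ha (P.symm hb)
    · exact P.symm ((ex_cls hb a).1 ((hab _ (inv_cls hb)).2 ((ex_cls hb b).2 (P.refl b))))
  · exact (ex_cls ha b).1 ((hab _ (inv_cls ha)).1 ((ex_cls ha a).2 (P.refl a)))

theorem Form.lset_iff {h : PRels e t} (hφe : ∀ i, φ (e i) = De i)
    (hφt : ∀ a b, φ (t a b) = Dt a b) {m s : N} {σ : PE n} (hf : h.Form m s σ)
    (a b : Option (Fin n)) :
    h.lset m a b ↔ ∀ f g, φ m f g → (ex f a ↔ ex f b) :=
  ⟨fun hab f g hfg => ((hf.map hφe hφt f g).1 hfg).1 a b hab,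
    fun H => rel_of_inv fun f hi => H f _ (hf.map_down hφe hφt hi)⟩

theorem Form.rset_iff {h : PRels e t} (hφe : ∀ i, φ (e i) = De i)
    (hφt : ∀ a b, φ (t a b) = Dt a b) {m s : N} {σ : PE n} (hf : h.Form m s σ)
    (a b : Option (Fin n)) :
    h.rset m a b ↔ ∀ f g, φ m f g → (ex g a ↔ ex g b) :=
  ⟨fun hab f g hfg => ((hf.map hφe hφt f g).1 hfg).2.2 a b hab,
    fun H => rel_of_inv fun g hi => H _ g (hf.map_up hφe hφt hi)⟩

theorem not_rel_none {P : Setoid (Option (Fin n))} {i : Fin n}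
    (hi : rep P (some i) = some i) : ¬ P (some i) none := by
  intro hc
  rw [rep_congr P hc, rep_none] at hi
  simp at hi

theorem eq_of_rel {P : Setoid (Option (Fin n))} {i j : Fin n}
    (hi : rep P (some i) = some i) (hj : rep P (some j) = some j)
    (hij : P (some i) (some j)) : i = j := by
  have := rep_congr P hij
  rw [hi, hj] at this
  exact Option.some.inj this

/-- Elements with a factorisation `x s y` are determined by their image in the model. -/
theorem eq_of_map_eq (h : PRels e t) (hφe : ∀ i, φ (e i) = De i)
    (hφt : ∀ a b, φ (t a b) = Dt a b) {m m' : N} (hm : Exp e t m) (hm' : Exp e t m')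
    (hmm : φ m = φ m') : m = m' := by
  obtain ⟨s, σ, hf, hr⟩ := h.exists_reduced hm
  obtain ⟨s', σ', hf', hr'⟩ := h.exists_reduced hm'
  have hL : h.lset m = h.lset m' := Setoid.ext fun a b => by
    rw [hf.lset_iff hφe hφt, hf'.lset_iff hφe hφt, hmm]
  have hR : h.rset m = h.rset m' := Setoid.ext fun a b => by
    rw [hf.rset_iff hφe hφt, hf'.rset_iff hφe hφt, hmm]
  -- A string of one partial permutation is a string of the other: propagate the colouring
  -- given by the class of its upper end.
  have key : ∀ {s s' : N} {σ σ' : PE n} {m m' : N}, h.Form m s σ → h.Form m' s' σ' →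
      h.lset m = h.lset m' → h.rset m = h.rset m' → φ m = φ m' →
      Reduced (h.lset m) (h.rset m) σ → Reduced (h.lset m') (h.rset m') σ' →
      ∀ i j, σ.ap i = some j → σ'.ap i = some j := by
    intro s s' σ σ' m m' hf hf' hL hR hmm hr hr' i j hij
    obtain ⟨hi, hj⟩ := hr i j hij
    have hi0 := not_rel_none hi
    have h1 := hf'.map_down hφe hφt (hL ▸ inv_cls hi0)
    rw [← hmm, hf.map hφe hφt] at h1
    obtain ⟨i', b', hib, hjb, hii⟩ := (h1.2.1 i j hij).1 ((h.lset m').refl' (some i))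
    obtain ⟨hi', hb'⟩ := hr' i' b' hib
    have hii' : h.lset m (some i) (some i') := hL ▸ hii
    rw [← hL] at hi'
    rw [← hR] at hjb hb'
    rw [eq_of_rel hi hi' hii', eq_of_rel hj hb' hjb, hib]
  have hσ : σ = σ' := by
    apply PE.ext'
    intro i
    rcases h1 : σ.ap i with _ | j
    · rcases h2 : σ'.ap i with _ | j
      · rfl
      · rw [key hf' hf hL.symm hR.symm hmm.symm hr' hr i j h2] at h1
        simp at h1
    · exact (key hf hf' hL hR hmm hr hr' i j h1).symm
  subst hσ
  rw [hf.2, hf'.2, hL, hR, J.unique h.gsys hf.1 hf'.1]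

end PRels

/-! ### Rook partitions as relations on colourings -/

section Colourings

open BR

variable {n : ℕ}

/-- A two-colouring of the points which is constant on the blocks of `α` and `False` on its
rook dots. -/
def Ok (α : RP n) (F : Pt n → Prop) : Prop :=
  (∀ x y, α.rel x y → (F x ↔ F y)) ∧ ∀ x, ¬ α.rel x x → ¬ F x

/-- The relation between upper and lower colourings defined by a rook partition. -/
def D (α : RP n) : BR n := fun f g => Ok α (Sum.elim f g)

theorem rel_iff (α : RP n) (x y : Pt n) :
    α.rel x y ↔ (∃ F, Ok α F ∧ F x) ∧ ∀ F, Ok α F → F x → F y := by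
  have hcls : Ok α (α.rel x) :=
    ⟨fun y z hyz => ⟨fun h => α.trans h hyz, fun h => α.trans h (α.symm hyz)⟩,
      fun y hy h => hy (α.trans (α.symm h) h)⟩
  constructor
  · intro h
    exact ⟨⟨_, hcls, α.trans h (α.symm h)⟩, fun F hF hx => (hF.1 x y h).1 hx⟩
  · rintro ⟨⟨F, hF, hx⟩, h⟩
    have hxx : α.rel x x := by
      by_contra hc
      exact hF.2 x hc hx
    exact h _ hcls hxx

/-- A rook partition is determined by its relation on colourings. -/
theorem D_injective : Function.Injective (D : RP n → BR n) := by
  intro α β hD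
  have hok : ∀ F, Ok α F ↔ Ok β F := by
    intro F
    have := congrFun (congrFun hD (F ∘ Sum.inl)) (F ∘ Sum.inr)
    simp only [D, Sum.elim_comp_inl_inr] at this
    exact this ▸ Iff.rfl
  have : α.rel = β.rel := by
    funext x y
    apply propext
    rw [rel_iff, rel_iff]
    simp only [hok]
  cases α
  cases β
  cases this
  rfl

theorem RClosure.iff_of {V : Type*} {E : V → V → Prop} {K : V → Prop}
    (hK : ∀ x y, E x y → (K x ↔ K y)) {x y : V} (h : RClosure E x y) : K x ↔ K y := by
  induction h with
  | base h => exact hK _ _ h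
  | refl => exact Iff.rfl
  | symm _ ih => exact ih.symm
  | trans _ _ ih1 ih2 => exact ih1.trans ih2

/-- Composing relations on colourings corresponds to the product of rook partitions: the
colour of a middle vertex is read off from the outer points it is connected to. -/
theorem D_mul (α β : RP n) : D (α * β) = D α * D β := by
  apply BR.ext'
  intro f g
  rw [mul_iff]
  constructor
  · intro h
    let K : V3 n → Prop := fun v => ∃ x, pgConn α β (embOut x) v ∧ Sum.elim f g x
    have hconn : ∀ v w, pgConn α β v w → (K v ↔ K w) := by
      intro v w hvw
      constructor
      · rintro ⟨x, hx, hF⟩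
        exact ⟨x, hx.trans hvw, hF⟩
      · rintro ⟨x, hx, hF⟩
        exact ⟨x, hx.trans hvw.symm, hF⟩
    have hwhite : ∀ w, pgWhite α β w → ¬ K w := by
      rintro w hw ⟨x, hx, hF⟩
      exact h.2 x (fun hxx => hxx.2 w hw hx) hF
    have hout : ∀ y, K (embOut y) ↔ Sum.elim f g y := by
      intro y
      constructor
      · rintro ⟨x, hx, hF⟩
        have hxx : (α * β).rel x x := by
          by_contra hc
          exact h.2 x hc hF
        exact (h.1 x y ⟨hx, hxx.2⟩).1 hF
      · intro hF
        exact ⟨y, RClosure.refl _, hF⟩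
    have hA : ∀ a, K (embA a) ↔ Sum.elim f (fun i => K (vMid i)) a := by
      rintro (i | i)
      · exact hout (Sum.inl i)
      · exact Iff.rfl
    have hB : ∀ a, K (embB a) ↔ Sum.elim (fun i => K (vMid i)) g a := by
      rintro (i | i)
      · exact Iff.rfl
      · exact hout (Sum.inr i)
    refine ⟨fun i => K (vMid i), ⟨?_, ?_⟩, ⟨?_, ?_⟩⟩
    · intro x y hxy
      rw [← hA, ← hA]
      exact hconn _ _ (RClosure.base (Or.inl ⟨x, y, hxy, rfl, rfl⟩))
    · intro x hx
      rw [← hA]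
      apply hwhite
      rcases x with i | i
      · exact Or.inl ⟨i, rfl, hx⟩
      · exact Or.inr (Or.inl ⟨i, rfl, Or.inl hx⟩)
    · intro x y hxy
      rw [← hB, ← hB]
      exact hconn _ _ (RClosure.base (Or.inr ⟨x, y, hxy, rfl, rfl⟩))
    · intro x hx
      rw [← hB]
      apply hwhite
      rcases x with i | i
      · exact Or.inr (Or.inl ⟨i, rfl, Or.inr hx⟩)
      · exact Or.inr (Or.inr ⟨i, rfl, hx⟩)
  · rintro ⟨k, h1, h2⟩
    let K : V3 n → Prop := Sum.elim f (Sum.elim k g)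
    have hout : ∀ y, K (embOut y) ↔ Sum.elim f g y := by rintro (i | i) <;> exact Iff.rfl
    have hA : ∀ y, K (embA y) ↔ Sum.elim f k y := by rintro (i | i) <;> exact Iff.rfl
    have hB : ∀ y, K (embB y) ↔ Sum.elim k g y := by rintro (i | i) <;> exact Iff.rfl
    have hconn : ∀ v w, pgConn α β v w → (K v ↔ K w) := by
      intro v w hvw
      refine RClosure.iff_of ?_ hvw
      rintro _ _ (⟨a, b, hab, rfl, rfl⟩ | ⟨a, b, hab, rfl, rfl⟩)
      · rw [hA, hA]
        exact h1.1 a b hab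
      · rw [hB, hB]
        exact h2.1 a b hab
    have hwhite : ∀ w, pgWhite α β w → ¬ K w := by
      rintro _ (⟨i, rfl, hi⟩ | ⟨i, rfl, hi | hi⟩ | ⟨i, rfl, hi⟩)
      · exact h1.2 _ hi
      · exact h1.2 _ hi
      · exact h2.2 _ hi
      · exact h2.2 _ hi
    constructor
    · intro x y hxy
      rw [← hout, ← hout]
      exact hconn _ _ hxy.1
    · intro x hx
      rw [← hout]
      intro hK
      apply hx
      refine ⟨RClosure.refl _, fun w hw hc => hwhite w hw ((hconn _ _ hc).1 hK)⟩

theorem D_permRP (π : Equiv.Perm (Fin n)) (f g : Fin n → Prop) :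
    D (permRP π) f g ↔ ∀ i, f i ↔ g (π i) := by
  constructor
  · intro h i
    exact h.1 (Sum.inl i) (Sum.inr (π i)) rfl
  · intro h
    have key : ∀ x, Sum.elim f g x ↔ g (Sum.elim (fun i => π i) (fun i => i) x) := by
      rintro (i | i)
      · exact h i
      · exact Iff.rfl
    refine ⟨fun x y hxy => ?_, fun x hx => (hx rfl).elim⟩
    rw [key, key, show Sum.elim (fun i => π i) (fun i => i) x = _ from hxy]

theorem D_one : D (1 : RP n) = 1 := by
  apply BR.ext'
  intro f g
  rw [one_iff]
  constructor
  · intro h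
    funext i
    exact propext (h.1 (Sum.inl i) (Sum.inr i) rfl)
  · rintro rfl
    have key : ∀ x, Sum.elim f f x ↔ f (idx x) := by rintro (i | i) <;> exact Iff.rfl
    refine ⟨fun x y hxy => ?_, fun x hx => (hx rfl).elim⟩
    rw [key, key, show idx x = idx y from hxy]

theorem D_ebar (i : Fin n) : D (ebar i) = De i := by
  apply BR.ext'
  intro f g
  constructor
  · intro h j hj
    exact h.1 (Sum.inl j) (Sum.inr j) (Or.inr ⟨rfl, hj⟩)
  · intro h
    have key : ∀ x : Pt n, idx x ≠ i → (Sum.elim f g x ↔ f (idx x)) := by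
      rintro (j | j) hj
      · exact Iff.rfl
      · exact (h j hj).symm
    refine ⟨?_, fun x hx => (hx (Or.inl rfl)).elim⟩
    rintro x y (rfl | ⟨h1, h2⟩)
    · rfl
    · rw [key x h2, key y (h1 ▸ h2), h1]

theorem D_tbar (i j : Fin n) : D (tbar i j) = Dt (some i) (some j) := by
  apply BR.ext'
  intro f g
  constructor
  · intro h
    refine ⟨funext fun k => propext (h.1 (Sum.inl k) (Sum.inr k) (Or.inl rfl)), ?_⟩
    exact h.1 (Sum.inl i) (Sum.inl j) (Or.inr ⟨Or.inl rfl, Or.inr rfl⟩)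
  · rintro ⟨rfl, h⟩
    rw [ex_some, ex_some] at h
    have key : ∀ x, Sum.elim f f x ↔ f (idx x) := by rintro (i | i) <;> exact Iff.rfl
    refine ⟨?_, fun x hx => (hx (Or.inl rfl)).elim⟩
    rintro x y (h1 | ⟨h1 | h1, h2 | h2⟩) <;> rw [key, key, h1]
    · rw [h2]
    · rw [h2, h]
    · rw [h2, h]
    · rw [h2]

theorem D_obar (i : Fin n) : D (obar i) = Dt (some i) none := by
  apply BR.ext'
  intro f g
  constructor
  · intro h
    have hf : ¬ f i := h.2 (Sum.inl i) fun hc => hc.2 rfl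
    have hg : ¬ g i := h.2 (Sum.inr i) fun hc => hc.2 rfl
    refine ⟨funext fun k => propext ?_, by simpa using hf⟩
    by_cases hk : k = i
    · subst hk
      exact ⟨fun h => (hf h).elim, fun h => (hg h).elim⟩
    · exact h.1 (Sum.inl k) (Sum.inr k) ⟨rfl, hk⟩
  · rintro ⟨rfl, h⟩
    have hf : ¬ f i := by simpa using h
    have key : ∀ x, Sum.elim f f x ↔ f (idx x) := by rintro (i | i) <;> exact Iff.rfl
    refine ⟨?_, fun x hx => ?_⟩
    · rintro x y ⟨h1, -⟩
      rw [key, key, h1]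
    · rw [key]
      have : idx x = i := by
        by_contra hc
        exact hx ⟨rfl, hc⟩
      rwa [this]

/-- The relation of a letter. -/
def Dl : ETO n → BR n
  | .e i => De i
  | .t i j _ => Dt (some i) (some j)
  | .o i => Dt (some i) none

theorem D_phiLetter (x : ETO n) : D (phiLetter x) = Dl x := by
  rcases x with i | ⟨i, j, _⟩ | i
  · exact D_ebar i
  · exact D_tbar i j
  · exact D_obar i

theorem D_PhiETO (w : List (ETO n)) : D (PhiETO w) = (w.map Dl).prod := by
  induction w with
  | nil => exact D_one
  | cons x w ih =>
    rcases w with _ | ⟨y, w⟩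
    · rw [List.map_cons, List.map_nil, List.prod_cons, List.prod_nil, mul_one, ← D_phiLetter]
      rfl
    · rw [List.map_cons, List.prod_cons, ← ih, ← D_phiLetter, ← D_mul]
      rfl

end Colourings

/-! ### The monoid defined by the presentation -/

section Presentation

open BR PRels

variable {n : ℕ}

/-- The congruence on the free monoid generated by the defining relations. -/
def pcon (n : ℕ) : Con (FreeMonoid (ETO n)) where
  r u v := CongGen (RelETO n) u.toList v.toList
  iseqv := ⟨fun _ => CongGen.refl _, CongGen.symm, CongGen.trans⟩
  mul' := CongGen.mul

/-- The class of a word in the monoid defined by the presentation. -/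
def cl (u : List (ETO n)) : (pcon n).Quotient := ((FreeMonoid.ofList u : FreeMonoid (ETO n)) : _)

theorem cl_eq {u v : List (ETO n)} : cl u = cl v ↔ CongGen (RelETO n) u v :=
  Con.eq (pcon n)

theorem cl_append (u v : List (ETO n)) : cl (u ++ v) = cl u * cl v := rfl

theorem cl_nil : cl ([] : List (ETO n)) = 1 := rfl

theorem cl_cons (x : ETO n) (u : List (ETO n)) : cl (x :: u) = cl [x] * cl u := rfl

theorem cl_rel {u v : List (ETO n)} (h : RelETO n u v) : cl u = cl v := cl_eq.2 (CongGen.rel h)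

/-- The class of the letter `e_i`. -/
def ee (i : Fin n) : (pcon n).Quotient := cl [ETO.e i]

/-- The class of `t_ij`, or of `o_i` if one of the points is the dot point. -/
def tt : Option (Fin n) → Option (Fin n) → (pcon n).Quotient
  | some i, some j => cl (tgd i j)
  | some i, none => cl [ETO.o i]
  | none, some i => cl [ETO.o i]
  | none, none => 1

theorem tg_symm (i j : Fin n) (h : i ≠ j) : tg i j h = tg j i h.symm := by
  unfold tg
  rcases lt_or_gt_of_ne h with h1 | h1
  · rw [dif_pos h1, dif_neg h1.asymm]
  · rw [dif_neg h1.asymm, dif_pos h1]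

theorem tt_ne {i j : Fin n} (h : i ≠ j) : tt (some i) (some j) = cl [tg i j h] := by
  rw [tt, tgd, dif_neg h]

theorem tt_none (i : Fin n) : tt (some i) none = cl [ETO.o i] := rfl

theorem tt_none' (i : Fin n) : tt none (some i) = cl [ETO.o i] := rfl

theorem tt_self (a : Option (Fin n)) : tt a a = 1 := by
  rcases a with _ | i
  · rfl
  · rw [tt, tgd, dif_pos rfl, cl_nil]

theorem tt_symm (a b : Option (Fin n)) : tt a b = tt b a := by
  rcases a with _ | i <;> rcases b with _ | j
  · rfl
  · rfl
  · rfl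
  · by_cases h : i = j
    · rw [h]
    · rw [tt_ne h, tt_ne (Ne.symm h), tg_symm]

theorem tt_idem (a b : Option (Fin n)) : tt a b * tt a b = tt a b := by
  rcases a with _ | i <;> rcases b with _ | j
  · exact one_mul _
  · exact cl_rel (.r11 j)
  · exact cl_rel (.r11 i)
  · by_cases h : i = j
    · rw [h, tt_self, one_mul]
    · rw [tt_ne h]
      exact cl_rel (.r3 i j h)

theorem oo_comm (i j : Fin n) : cl [ETO.o i] * cl [ETO.o j] = cl [ETO.o j] * cl [ETO.o i] := by
  by_cases h : i = j
  · rw [h]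
  · exact cl_rel (.r12 i j h)

theorem to_comm (i j k : Fin n) :
    tt (some i) (some j) * cl [ETO.o k] = cl [ETO.o k] * tt (some i) (some j) := by
  by_cases h : i = j
  · rw [h, tt_self, one_mul, mul_one]
  · rw [tt_ne h]
    exact cl_rel (.r16 i j k h)

theorem tt_comm (a b c d : Option (Fin n)) : tt a b * tt c d = tt c d * tt a b := by
  rcases a with _ | i <;> rcases b with _ | j <;> rcases c with _ | k <;> rcases d with _ | l <;>
    try simp only [tt_self, one_mul, mul_one, tt_none, tt_none', oo_comm, to_comm]
  · by_cases h : i = j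
    · rw [h, tt_self, one_mul, mul_one]
    by_cases h' : k = l
    · rw [h', tt_self, one_mul, mul_one]
    rw [tt_ne h, tt_ne h']
    exact cl_rel (.r4 i j k l h h')

theorem to_left {i j : Fin n} (h : i ≠ j) :
    tt (some i) (some j) * cl [ETO.o i] = cl [ETO.o i] * cl [ETO.o j] := by
  rw [tt_ne h]
  exact cl_rel (.r17a i j h)

theorem to_right {i j : Fin n} (h : i ≠ j) :
    tt (some i) (some j) * cl [ETO.o j] = cl [ETO.o i] * cl [ETO.o j] := by
  rw [tt_ne h]
  exact cl_rel (.r17b i j h)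

theorem tt_tri (a b c : Option (Fin n)) : tt a b * tt b c = tt b c * tt c a := by
  by_cases hab : a = b
  · rw [hab, tt_self, one_mul, tt_symm c b, tt_idem]
  by_cases hbc : b = c
  · rw [hbc, tt_self, one_mul, mul_one, tt_symm]
  by_cases hac : a = c
  · rw [hac, tt_self, mul_one, tt_symm c b, tt_idem]
  rcases a with _ | i <;> rcases b with _ | j <;> rcases c with _ | k <;>
    simp only [tt_none, tt_none', not_true_eq_false, reduceCtorEq, not_false_eq_true,
      Option.some.injEq] at hab hbc hac ⊢
  · rw [← to_comm, to_left hbc, ← to_right hbc]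
  · rw [← to_comm, to_left (Ne.symm hac), oo_comm]
  · rw [to_right hab, oo_comm]
  · rw [tt_ne hab, tt_ne hbc, tt_ne (Ne.symm hac)]
    exact cl_rel (.r5 i j k hab hbc hac)

/-- The presented monoid satisfies the uniform relations, the dot letters `o_i` being the letters
`t` joining `i` to the dot point. -/
theorem prels_tt : PRels (ee : Fin n → _) tt where
  t_self := tt_self
  t_symm := tt_symm
  t_idem := tt_idem
  t_comm := tt_comm
  t_tri := tt_tri
  e_idem i := cl_rel (.r1 i)
  e_comm i j := by
    by_cases h : i = j
    · rw [h]
    · exact cl_rel (.r2 i j h)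
  te_comm a b k ha hb := by
    by_cases hab : a = b
    · rw [hab, tt_self, one_mul, mul_one]
    rcases a with _ | i <;> rcases b with _ | j <;>
      simp only [ne_eq, not_true_eq_false, reduceCtorEq, not_false_eq_true,
        Option.some.injEq] at ha hb hab
    · exact cl_rel (.r13 j k hb)
    · exact cl_rel (.r13 i k ha)
    · rw [tt_ne hab]
      exact cl_rel (.r6 i j k hab (Ne.symm ha) (Ne.symm hb))
  tet k a ha := by
    rcases a with _ | i
    · exact cl_rel (.r14 k)
    · have h : k ≠ i := fun hc => ha (by rw [hc])
      rw [tt_ne h]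
      exact cl_rel (.r7 k i k h (Or.inl rfl))
  ete k a ha := by
    rcases a with _ | i
    · exact cl_rel (.r15 k)
    · have h : k ≠ i := fun hc => ha (by rw [hc])
      rw [tt_ne h]
      exact cl_rel (.r8 k i k h (Or.inl rfl))
  r9 i j k hij hjk hik := by
    have he : ∀ i : Fin n, ∀ x, ee i * (ee i * x) = ee i * x := fun i x => by
      rw [← mul_assoc, show ee i * ee i = ee i from cl_rel (.r1 i)]
    simp only [G, mul_assoc, he]
    rw [tt_ne hik.symm, tt_ne hij, tt_ne hjk, tt_ne hjk.symm, tt_ne hij.symm, tt_ne hik]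
    exact cl_rel (.r9 i j k hij hjk hik)
  r10 i j k l hij hik hil hjk hjl hkl := by
    have he : ∀ i : Fin n, ∀ x, ee i * (ee i * x) = ee i * x := fun i x => by
      rw [← mul_assoc, show ee i * ee i = ee i from cl_rel (.r1 i)]
    simp only [G, mul_assoc, he]
    rw [tt_ne hik.symm, tt_ne hij, tt_ne hjl, tt_ne hkl.symm, tt_ne hkl, tt_ne hil.symm,
      tt_ne hjk]
    exact cl_rel (.r10 i j k l hij hik hil hjk hjl hkl)

theorem Dl_tg (i j : Fin n) (h : i ≠ j) : Dl (tg i j h) = Dt (some i) (some j) := by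
  unfold tg
  split_ifs
  · rfl
  · exact prels.t_symm _ _

/-- The defining relations hold in the model. -/
theorem Dl_rel {u v : List (ETO n)} (h : RelETO n u v) :
    (u.map Dl).prod = (v.map Dl).prod := by
  have P := prels (n := n)
  have he : ∀ (i : Fin n) (x : BR n), De i * (De i * x) = De i * x := fun i x => by
    rw [← mul_assoc, P.e_idem]
  induction h <;> simp only [List.map_cons, List.map_nil, List.prod_cons, List.prod_nil, mul_one,
    Dl_tg] <;> try simp only [Dl]
  case r1 i => exact P.e_idem i
  case r2 i j _ => exact P.e_comm i j
  case r3 => exact P.t_idem _ _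
  case r4 => exact P.t_comm _ _ _ _
  case r5 => exact P.t_tri _ _ _
  case r6 i j k _ hki hkj =>
    exact P.te_comm _ _ _ (fun hc => hki (Option.some.inj hc).symm)
      (fun hc => hkj (Option.some.inj hc).symm)
  case r7 i j k hij hk =>
    rw [← mul_assoc]
    rcases hk with rfl | rfl
    · exact P.tet _ _ fun hc => hij (Option.some.inj hc).symm
    · rw [P.t_symm]
      exact P.tet _ _ fun hc => hij (Option.some.inj hc)
  case r8 i j k hij hk =>
    rw [← mul_assoc]
    rcases hk with rfl | rfl
    · exact P.ete _ _ fun hc => hij (Option.some.inj hc).symm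
    · rw [P.t_symm]
      exact P.ete _ _ fun hc => hij (Option.some.inj hc)
  case r9 i j k hij hjk hik =>
    have := P.r9 i j k hij hjk hik
    simpa only [G, mul_assoc, he] using this
  case r10 i j k l hij hik hil hjk hjl hkl =>
    have := P.r10 i j k l hij hik hil hjk hjl hkl
    simpa only [G, mul_assoc, he] using this
  case r11 => exact P.t_idem _ _
  case r12 => exact P.t_comm _ _ _ _
  case r13 i j h => exact P.te_comm _ _ _ (fun hc => h (Option.some.inj hc)) (by simp)
  case r14 =>
    rw [← mul_assoc]
    exact P.tet _ _ (by simp)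
  case r15 =>
    rw [← mul_assoc]
    exact P.ete _ _ (by simp)
  case r16 => exact P.t_comm _ _ _ _
  case r17a i j h =>
    rw [P.t_symm, P.t_tri, P.t_symm none (some j)]
  case r17b i j h =>
    rw [P.t_tri, P.t_symm none (some i), P.t_comm]

theorem Dl_cong {u v : List (ETO n)} (h : CongGen (RelETO n) u v) :
    (u.map Dl).prod = (v.map Dl).prod := by
  induction h with
  | rel h => exact Dl_rel h
  | refl => rfl
  | symm _ ih => exact ih.symm
  | trans _ _ ih1 ih2 => exact ih1.trans ih2
  | mul _ _ ih1 ih2 => rw [List.map_append, List.map_append, List.prod_append, List.prod_append,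
      ih1, ih2]

/-- The homomorphism from the monoid defined by the presentation to the model. -/
def phiBR (n : ℕ) : (pcon n).Quotient →* BR n :=
  (pcon n).lift
    { toFun := fun u => (u.toList.map Dl).prod
      map_one' := rfl
      map_mul' := fun u v => by
        rw [FreeMonoid.toList_mul, List.map_append, List.prod_append] }
    fun _ _ h => Dl_cong h

theorem phiBR_cl (u : List (ETO n)) : phiBR n (cl u) = D (PhiETO u) := by
  rw [D_PhiETO]
  rfl

theorem phiBR_ee (i : Fin n) : phiBR n (ee i) = De i := mul_one _

theorem phiBR_tt (a b : Option (Fin n)) : phiBR n (tt a b) = Dt a b := by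
  rcases a with _ | i <;> rcases b with _ | j
  · rw [tt_self, map_one, prels.t_self]
  · exact (mul_one _).trans (prels.t_symm _ _)
  · exact mul_one _
  · by_cases h : i = j
    · rw [h, tt_self, map_one, prels.t_self]
    · rw [tt_ne h]
      exact (mul_one _).trans (Dl_tg i j h)

/-- Every class is the class of a word. -/
theorem exists_cl (m : (pcon n).Quotient) : ∃ u, cl u = m := by
  induction m using Con.induction_on with
  | H u => exact ⟨u.toList, rfl⟩

theorem tt_eq_cl {i j : Fin n} (h : i < j) : cl [ETO.t i j h] = tt (some i) (some j) := by
  rw [tt_ne h.ne, tg, dif_pos h]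

/-- Classes of nonempty words have a factorisation around a partial permutation. -/
theorem exp_cl (u : List (ETO n)) (hu : u ≠ []) : Exp (ee : Fin n → _) tt (cl u) := by
  induction u using List.reverseRecOn with
  | nil => exact (hu rfl).elim
  | append_singleton u x ih =>
    rcases eq_or_ne u [] with rfl | hu'
    · rw [List.nil_append]
      rcases x with i | ⟨i, j, h⟩ | i
      · exact prels_tt.exp_e i
      · rw [tt_eq_cl]
        exact prels_tt.exp_t i _ fun hc => h.ne' (Option.some.inj hc)
      · exact prels_tt.exp_t i none (by simp)
    · rw [cl_append]
      rcases x with i | ⟨i, j, h⟩ | i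
      · exact prels_tt.exp_mul_e (ih hu') i
      · rw [tt_eq_cl]
        exact exp_mul_t (ih hu') _ _
      · exact exp_mul_t (ih hu') (some i) none

/-- Nonempty words represent the same rook partition iff they are congruent. -/
theorem kernel (u v : List (ETO n)) (hu : u ≠ []) (hv : v ≠ []) :
    PhiETO u = PhiETO v ↔ CongGen (RelETO n) u v := by
  rw [← cl_eq]
  constructor
  · intro h
    refine prels_tt.eq_of_map_eq phiBR_ee phiBR_tt (exp_cl u hu) (exp_cl v hv) ?_
    rw [phiBR_cl, phiBR_cl, h]
  · intro h
    apply D_injective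
    rw [← phiBR_cl, ← phiBR_cl, h]

/-- Products of generators are singular. -/
theorem not_isPermDiag (w : List (ETO n)) (hw : w ≠ []) : ¬ (PhiETO w).IsPermDiag := by
  rintro ⟨π, hπ⟩
  have hD := D_PhiETO w
  rw [hπ] at hD
  rcases w with _ | ⟨x, w⟩
  · exact hw rfl
  rw [List.map_cons, List.prod_cons] at hD
  -- The relation is the graph of a bijection, but the first letter `x` either fails to determine
  -- the upper colouring, or is not defined on some upper colouring.
  have h1 : ∀ f g, (Dl x * (w.map Dl).prod) f g ↔ ∀ i, f i ↔ g (π i) := by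
    intro f g
    rw [← hD, D_permRP]
  have hex : ∀ f : Fin n → Prop, ∃ g : Fin n → Prop, ∀ i, f i ↔ g (π i) := fun f =>
    ⟨fun j => f (π.symm j), fun i => by simp⟩
  rcases x with i | ⟨i, j, h⟩ | i
  · obtain ⟨g, hg⟩ := hex fun _ => True
    obtain ⟨k, hk, hkg⟩ := (h1 _ _).2 hg
    have h2 := (h1 (fun a => a ≠ i) g).1 ⟨k, fun a ha => by
      rw [← hk a ha]; exact iff_of_true ha trivial, hkg⟩ i
    exact h2.2 ((hg i).1 trivial) rfl
  · obtain ⟨g, hg⟩ := hex fun a => a = i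
    obtain ⟨k, hk, -⟩ := (h1 _ _).2 hg
    exact h.ne' (hk.2.1 rfl)
  · obtain ⟨g, hg⟩ := hex fun _ => True
    obtain ⟨k, hk, -⟩ := (h1 _ _).2 hg
    exact hk.2.1 trivial

end Presentation

/-! ### Every singular rook partition is a product of generators -/

section Surjective

open BR PRels

variable {n : ℕ}

/-- The kernel of `α` on one row, given by `ι`: points are equivalent if they lie in one block
or are both dots; the dot point is equivalent to the rook dots. It is encoded through the
colourings constant on blocks. -/
def ker (α : RP n) (ι : Fin n → Pt n) : Setoid (Option (Fin n)) where
  r a b := ∀ F, Ok α F → (ex (F ∘ ι) a ↔ ex (F ∘ ι) b)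
  iseqv := ⟨fun _ _ _ => Iff.rfl, fun h F hF => (h F hF).symm,
    fun h h' F hF => (h F hF).trans (h' F hF)⟩

theorem ker_of_rel {α : RP n} {ι : Fin n → Pt n} {i j : Fin n} (h : α.rel (ι i) (ι j)) :
    ker α ι (some i) (some j) := fun _ hF => hF.1 _ _ h

theorem rel_of_ker {α : RP n} {ι : Fin n → Pt n} {i j : Fin n}
    (h : ker α ι (some i) (some j)) (hi : α.rel (ι i) (ι i)) : α.rel (ι i) (ι j) := by
  rw [rel_iff] at hi ⊢
  exact ⟨hi.1, fun F hF => (h F hF).1⟩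

theorem ker_none {α : RP n} {ι : Fin n → Pt n} {i : Fin n} (h : ¬ α.rel (ι i) (ι i)) :
    ker α ι (some i) none := fun _ hF => iff_of_false (hF.2 _ h) id

theorem rel_of_not_none {α : RP n} {ι : Fin n → Pt n} {i : Fin n}
    (h : ¬ ker α ι (some i) none) : α.rel (ι i) (ι i) := by
  by_contra hc
  exact h (ker_none hc)

/-- A point that is not a dot is in the same block as the representative of its class. -/
theorem exists_rep {α : RP n} {ι : Fin n → Pt n} {i : Fin n} (h : α.rel (ι i) (ι i)) :
    ∃ i', rep (ker α ι) (some i) = some i' ∧ α.rel (ι i) (ι i') := by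
  have hr := rep_rel (ker α ι) (some i)
  rcases hi : rep (ker α ι) (some i) with _ | i'
  · rw [hi] at hr
    obtain ⟨F, hF, hFi⟩ := ((rel_iff α _ _).1 h).1
    exact ((hr F hF).2 hFi).elim
  · rw [hi] at hr
    exact ⟨i', rfl, rel_of_ker ((ker α ι).symm hr) h⟩

theorem exists_PE {T : Fin n → Fin n → Prop} (h1 : ∀ i j j', T i j → T i j' → j = j')
    (h2 : ∀ i i' j, T i j → T i' j → i = i') : ∃ σ : PE n, ∀ i j, σ.ap i = some j ↔ T i j := by
  classical
  have k1 : ∀ i j, (if h : ∃ j, T i j then some h.choose else none) = some j ↔ T i j := by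
    intro i j
    split_ifs with h
    · rw [Option.some.injEq]
      exact ⟨fun hj => hj ▸ h.choose_spec, fun hj => h1 _ _ _ h.choose_spec hj⟩
    · exact ⟨fun hj => by simp at hj, fun hj => (h ⟨j, hj⟩).elim⟩
  have k2 : ∀ i j, (if h : ∃ i, T i j then some h.choose else none) = some i ↔ T i j := by
    intro i j
    split_ifs with h
    · rw [Option.some.injEq]
      exact ⟨fun hj => hj ▸ h.choose_spec, fun hj => h2 _ _ _ h.choose_spec hj⟩
    · exact ⟨fun hj => by simp at hj, fun hj => (h ⟨i, hj⟩).elim⟩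
  exact ⟨({ toFun := fun i => if h : ∃ j, T i j then some h.choose else none
            invFun := fun j => if h : ∃ i, T i j then some h.choose else none
            inv := fun i j => (k2 i j).trans (k1 i j).symm } : Fin n ≃. Fin n), k1⟩

/-- A rook partition is encoded by its upper and lower kernels, together with the partial
permutation connecting representatives of upper and lower classes. -/
theorem exists_encoding (α : RP n) : ∃ σ : PE n,
    Reduced (ker α Sum.inl) (ker α Sum.inr) σ ∧
    ∀ f g, D α f g ↔ Inv (ker α Sum.inl) f ∧ R σ f g ∧ Inv (ker α Sum.inr) g := by
  obtain ⟨σ, hσ⟩ := exists_PE (T := fun i j => rep (ker α Sum.inl) (some i) = some i ∧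
      rep (ker α Sum.inr) (some j) = some j ∧ α.rel (Sum.inl i) (Sum.inr j))
    (fun i j j' h h' => eq_of_rel h.2.1 h'.2.1
      (ker_of_rel (α.trans (α.symm h.2.2) h'.2.2)))
    (fun i i' j h h' => eq_of_rel h.1 h'.1
      (ker_of_rel (α.trans h.2.2 (α.symm h'.2.2))))
  refine ⟨σ, fun i j hij => ⟨((hσ i j).1 hij).1, ((hσ i j).1 hij).2.1⟩, fun f g => ?_⟩
  constructor
  · intro h
    exact ⟨fun a b hab => hab _ h, fun a b hab => h.1 _ _ ((hσ a b).1 hab).2.2,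
      fun a b hab => hab _ h⟩
  · rintro ⟨h1, h2, h3⟩
    have key : ∀ i j, α.rel (Sum.inl i) (Sum.inr j) → (f i ↔ g j) := by
      intro i j hij
      obtain ⟨i', hi, hri⟩ := exists_rep (ι := Sum.inl) (α.trans hij (α.symm hij))
      obtain ⟨j', hj, hrj⟩ := exists_rep (ι := Sum.inr) (α.trans (α.symm hij) hij)
      have hij' : σ.ap i' = some j' := by
        refine (hσ i' j').2 ⟨?_, ?_, α.trans (α.symm hri) (α.trans hij hrj)⟩
        · rw [← hi, rep_rep]
        · rw [← hj, rep_rep]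
      exact ((h1 _ _ (ker_of_rel hri)).trans (h2 _ _ hij')).trans (h3 _ _ (ker_of_rel hrj)).symm
    constructor
    · rintro (i | i) (j | j) hij
      · exact h1 _ _ (ker_of_rel hij)
      · exact key i j hij
      · exact (key j i (α.symm hij)).symm
      · exact h3 _ _ (ker_of_rel hij)
    · rintro (i | i) hi
      · exact fun hf => (h1 _ _ (ker_none hi)).1 hf
      · exact fun hg => (h3 _ _ (ker_none hi)).1 hg

theorem inv_of_rep {P : Setoid (Option (Fin n))} (h : ∀ i, rep P (some i) = some i)
    (f : Fin n → Prop) : Inv P f := by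
  have hrep : ∀ a, rep P a = a := by
    rintro (_ | i)
    · exact rep_none P
    · exact h i
  intro a b hab
  rw [← hrep a, rep_congr P hab, hrep b]

/-- The partial permutation of a singular rook partition is not a permutation. -/
theorem exists_ap_none {α : RP n} (hα : ¬ α.IsPermDiag) {σ : PE n}
    (hr : Reduced (ker α Sum.inl) (ker α Sum.inr) σ)
    (hσ : ∀ f g, D α f g ↔ Inv (ker α Sum.inl) f ∧ R σ f g ∧ Inv (ker α Sum.inr) g) :
    ∃ k, σ.ap k = none := by
  by_contra! hc
  have hs : ∀ i, ∃ j, σ.ap i = some j := fun i => Option.ne_none_iff_exists'.1 (hc i)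
  choose p hp using hs
  have hinj : Function.Injective p := fun i i' hii =>
    σ.inj (hp i) (by rw [hp i', hii])
  let π : Equiv.Perm (Fin n) := Equiv.ofBijective p (Finite.injective_iff_bijective.1 hinj)
  have hπ : ∀ i, σ.ap i = some (π i) := hp
  apply hα
  refine ⟨π, D_injective (BR.ext' fun f g => ?_)⟩
  rw [hσ, D_permRP]
  constructor
  · intro h i
    exact h.2.1 _ _ (hπ i)
  · intro h
    refine ⟨inv_of_rep (fun i => (hr i _ (hπ i)).1) f, fun a b hab => ?_,
      inv_of_rep (fun j => ?_) g⟩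
    · rw [hπ] at hab
      rw [← Option.some.inj hab]
      exact h a
    · have := (hr (π.symm j) _ (hπ _)).2
      rwa [Equiv.apply_symm_apply] at this

/-- Singular rook partitions are products of generators. -/
theorem surjective (α : RP n) (hα : ¬ α.IsPermDiag) :
    ∃ w : List (ETO n), w ≠ [] ∧ PhiETO w = α := by
  obtain ⟨σ, hr, hσ⟩ := exists_encoding α
  obtain ⟨k, hk⟩ := exists_ap_none hα hr hσ
  obtain ⟨s, hs⟩ := J.exists_of_none (G (ee : Fin n → _) tt) σ k hk
  obtain ⟨w, hw⟩ := exists_cl (W tt (ker α Sum.inl) * s * W tt (ker α Sum.inr))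
  have hwα : PhiETO w = α := by
    apply D_injective
    rw [← phiBR_cl, hw, map_mul, map_mul, map_J phiBR_ee phiBR_tt hs]
    apply BR.ext'
    intro f g
    rw [hσ, mul_iff]
    constructor
    · rintro ⟨k, ⟨l, h1, h2⟩, h3⟩
      obtain ⟨rfl, i1⟩ := (prels_tt.map_W phiBR_tt _ _ _).1 h1
      obtain ⟨rfl, i3⟩ := (prels_tt.map_W phiBR_tt _ _ _).1 h3
      exact ⟨i1, h2, i3⟩
    · rintro ⟨h1, h2, h3⟩
      exact ⟨g, ⟨f, (prels_tt.map_W phiBR_tt _ _ _).2 ⟨rfl, h1⟩, h2⟩,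
        (prels_tt.map_W phiBR_tt _ _ _).2 ⟨rfl, h3⟩⟩
  refine ⟨w, ?_, hwα⟩
  rintro rfl
  apply hα
  refine ⟨1, ?_⟩
  rw [← hwα]
  apply D_injective
  apply BR.ext'
  intro f g
  rw [D_permRP, show (PhiETO [] : RP n) = 1 from rfl, D_one, one_iff]
  exact ⟨fun h i => h ▸ Iff.rfl, fun h => funext fun i => propext (h i)⟩

end Surjective

/-- Theorem: presentation of `RP_n ∖ S_n`: the homomorphism
`Φ : (E ∪ T ∪ O)⁺ → RP_n ∖ S_n` maps into the singular part, is surjective onto it, and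
its kernel congruence is exactly the congruence `~` generated by (R1)–(R17). -/
theorem stmt11 (n : ℕ) (hn : 1 ≤ n) :
    (∀ w : List (ETO n), w ≠ [] → ¬ (PhiETO w).IsPermDiag) ∧
    (∀ α : RP n, ¬ α.IsPermDiag → ∃ w : List (ETO n), w ≠ [] ∧ PhiETO w = α) ∧
    (∀ u v : List (ETO n), u ≠ [] → v ≠ [] →
      (PhiETO u = PhiETO v ↔ CongGen (RelETO n) u v)) := by
  exact ⟨not_isPermDiag, surjective, kernel⟩

end RookPaper
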